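/- arXiv:2505.14322 — 3 statements merged into one kernel-verified Lean document; each statement's English description precedes it below -/
import Mathlib

section
/- Let 1 ≤ m ≤ s ≤ n, let S be a totally isotropic s-space and M a totally isotropic m-space of the symplectic polar space of rank n with M ∩ S^⊥ = {0}. Then the number of totally isotropic s-spaces T with M ⊆ T and T opposite to S (i.e. S^⊥ ∩ T = {0}) equals q^{(s−m)(2n−s−m+1) − (s−m)(s−m+1)/2}. -/
open scoped Classical

open Module

section Defs

variable {F V : Type} [Field F] [AddCommGroup V] [Module F V]

/-- The orthogonal complement of a subspace with respect to a bilinear form. -/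
def bperp (B : V →ₗ[F] V →ₗ[F] F) (W : Submodule F V) : Submodule F V :=
  ⨅ w ∈ W, LinearMap.ker (B w)

/-- A subspace is totally isotropic for `B`. -/
def IsTotIso (B : V →ₗ[F] V →ₗ[F] F) (W : Submodule F V) : Prop :=
  ∀ u ∈ W, ∀ w ∈ W, B u w = 0

/-- `B` is an alternating form. -/
def IsAltForm (B : V →ₗ[F] V →ₗ[F] F) : Prop := ∀ v, B v v = 0

/-- `B` is nondegenerate. -/
def NondegForm (B : V →ₗ[F] V →ₗ[F] F) : Prop := ∀ v, (∀ w, B v w = 0) → v = 0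

/-- A flag of type `J` of totally isotropic subspaces: entries outside `J` are `⊥`. -/
structure SFlag (B : V →ₗ[F] V →ₗ[F] F) (J : Finset ℕ) where
  space : ℕ → Submodule F V
  isotropic : ∀ i ∈ J, IsTotIso B (space i)
  finrank_eq : ∀ i ∈ J, Module.finrank F (space i) = i
  mono : ∀ i ∈ J, ∀ j ∈ J, i ≤ j → space i ≤ space j
  eq_bot : ∀ i, i ∉ J → space i = ⊥

/-- Two flags of type `J` are opposite. -/
def FlagOpp {B : V →ₗ[F] V →ₗ[F] F} {J : Finset ℕ} (C C' : SFlag B J) : Prop :=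
  ∀ i ∈ J, bperp B (C.space i) ⊓ C'.space i = ⊥

/-- An EKR-set of flags of type `J`: no two members are opposite. -/
def IsEKRFlags {B : V →ₗ[F] V →ₗ[F] F} {J : Finset ℕ} (𝓕 : Set (SFlag B J)) : Prop :=
  ∀ C ∈ 𝓕, ∀ C' ∈ 𝓕, ¬ FlagOpp C C'

/-- Two subspaces are opposite. -/
def SpaceOpp (B : V →ₗ[F] V →ₗ[F] F) (S T : Submodule F V) : Prop :=
  bperp B S ⊓ T = ⊥

/-- An EKR-set of totally isotropic `s`-spaces: no two members are opposite. -/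
def IsEKRSpaces (B : V →ₗ[F] V →ₗ[F] F) (s : ℕ) (𝓕 : Set (Submodule F V)) : Prop :=
  (∀ S ∈ 𝓕, IsTotIso B S ∧ Module.finrank F S = s) ∧
    ∀ S ∈ 𝓕, ∀ T ∈ 𝓕, ¬ SpaceOpp B S T

/-- An `s`-space `S` is heavy with respect to a set `𝓕` of flags: every flag whose
`s`-th entry equals `S` belongs to `𝓕`. -/
def Heavy {B : V →ₗ[F] V →ₗ[F] F} {J : Finset ℕ} (𝓕 : Set (SFlag B J)) (s : ℕ)
    (S : Submodule F V) : Prop :=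
  ∀ C : SFlag B J, C.space s = S → C ∈ 𝓕

end Defs

/-- `z_k = ∏_{i=1}^k (q^i-1)/(q-1)`. -/
noncomputable def zpol (q k : ℕ) : ℝ :=
  ∏ i ∈ Finset.Icc 1 k, ((q : ℝ) ^ i - 1) / ((q : ℝ) - 1)

/-- The Gaussian binomial coefficient `[m choose k]_q` as a real number. -/
noncomputable def gaussq (q m k : ℕ) : ℝ :=
  ∏ i ∈ Finset.Icc 1 k, ((q : ℝ) ^ (m - k + i) - 1) / ((q : ℝ) ^ i - 1)

/-- `Φ_m^s` in `PS(n,1,q)`: the number of totally isotropic `s`-spaces containing a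
fixed totally isotropic `m`-space. -/
noncomputable def PhiP (q n m s : ℕ) : ℝ :=
  gaussq q (n - m) (s - m) * ∏ i ∈ Finset.Icc 1 (s - m), ((q : ℝ) ^ (n - m + 1 - i) + 1)
section Helpers

variable {F V : Type} [Field F] [AddCommGroup V] [Module F V]

lemma mem_bperp_iff (B : V →ₗ[F] V →ₗ[F] F) (W : Submodule F V) (v : V) :
    v ∈ bperp B W ↔ ∀ w ∈ W, B w v = 0 := by
  simp [bperp, Submodule.mem_iInf]

lemma altForm_swap {B : V →ₗ[F] V →ₗ[F] F} (halt : IsAltForm B) (u v : V)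
    (h : B u v = 0) : B v u = 0 := by
  have h1 := halt (u + v)
  simp only [map_add, LinearMap.add_apply, halt u, halt v, h] at h1
  simpa using h1

lemma finrank_bperp [FiniteDimensional F V] {B : V →ₗ[F] V →ₗ[F] F} (halt : IsAltForm B)
    (hnd : NondegForm B) (W : Submodule F V) :
    finrank F (bperp B W) = finrank F V - finrank F W := by
  have hB : LinearMap.BilinForm.Nondegenerate (B : LinearMap.BilinForm F V) := by
    refine ⟨fun v hv => hnd v hv, fun v hv => hnd v fun w => ?_⟩
    exact altForm_swap halt _ _ (hv w)
  rw [← LinearMap.BilinForm.finrank_orthogonal hB W]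
  have : bperp B W = LinearMap.BilinForm.orthogonal (B : LinearMap.BilinForm F V) W := by
    ext v
    rw [mem_bperp_iff, LinearMap.BilinForm.mem_orthogonal_iff]
  rw [this]

lemma card_filter_sub [Fintype F] [FiniteDimensional F V] [Fintype V] (A C : Submodule F V)
    (h : A ≤ C) :
    (Finset.univ.filter fun v : V => v ∈ C ∧ v ∉ A).card =
      Fintype.card F ^ finrank F C - Fintype.card F ^ finrank F A := by
  have key : ∀ W : Submodule F V, (Finset.univ.filter fun v : V => v ∈ W).card =
      Fintype.card F ^ finrank F W := by
    intro W
    rw [← Nat.card_eq_fintype_card (α := F), ← Module.natCard_eq_pow_finrank (K := F) (V := W),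
      Nat.card_eq_fintype_card, Fintype.card_subtype]
  rw [← key, ← key, ← Finset.card_sdiff_of_subset]
  · congr 1
    ext v
    simp
  · intro v
    simpa using fun hv => h hv

lemma finrank_inter [FiniteDimensional F V] {B : V →ₗ[F] V →ₗ[F] F} (halt : IsAltForm B)
    (hnd : NondegForm B) (S M : Submodule F V) (hSiso : IsTotIso B S) (hMiso : IsTotIso B M)
    (hskew : M ⊓ bperp B S = ⊥) :
    finrank F (bperp B M ⊓ (M ⊔ bperp B S) : Submodule F V) = finrank F V - finrank F S := by
  have hMM : M ≤ bperp B M := fun v hv => (mem_bperp_iff _ _ _).2 fun w hw => hMiso w hw v hv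
  have hSS : S ≤ bperp B S := fun v hv => (mem_bperp_iff _ _ _).2 fun w hw => hSiso w hw v hv
  have e1 : bperp B M ⊓ (M ⊔ bperp B S) = M ⊔ bperp B (M ⊔ S) := by
    have e2 : bperp B (M ⊔ S) = bperp B S ⊓ bperp B M := by
      ext v
      simp only [mem_bperp_iff, Submodule.mem_inf]
      constructor
      · exact fun h => ⟨fun w hw => h w (Submodule.mem_sup_right hw),
          fun w hw => h w (Submodule.mem_sup_left hw)⟩
      · rintro ⟨h1, h2⟩ w hw
        obtain ⟨a, ha, b, hb, rfl⟩ := Submodule.mem_sup.1 hw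
        simp [h1 b hb, h2 a ha]
    rw [e2, inf_comm, sup_inf_assoc_of_le _ hMM]
  have e3 : M ⊓ S = ⊥ := le_bot_iff.1 (hskew ▸ inf_le_inf_left M hSS)
  have e4 : M ⊓ bperp B (M ⊔ S) = ⊥ := by
    refine le_bot_iff.1 (hskew ▸ inf_le_inf_left M fun v hv => ?_)
    rw [mem_bperp_iff] at hv ⊢
    exact fun w hw => hv w (Submodule.mem_sup_right hw)
  have h1 := Submodule.finrank_sup_add_finrank_inf_eq M S
  have h2 := Submodule.finrank_sup_add_finrank_inf_eq M (bperp B (M ⊔ S))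
  have h3 := finrank_bperp halt hnd (M ⊔ S)
  have h4 := Submodule.finrank_le (M ⊔ S)
  rw [e3, finrank_bot] at h1
  rw [e4, finrank_bot] at h2
  rw [e1]
  omega

/-- The spaces being counted. -/
def GoodT (B : V →ₗ[F] V →ₗ[F] F) (S M : Submodule F V) (s : ℕ) (T : Submodule F V) : Prop :=
  IsTotIso B T ∧ finrank F T = s ∧ M ≤ T ∧ bperp B S ⊓ T = ⊥

lemma good_step {B : V →ₗ[F] V →ₗ[F] F} (S M : Submodule F V) (s : ℕ) (T : Submodule F V)
    (v : V) :
    (GoodT B S M s T ∧ v ∈ T ∧ v ∉ M) ↔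
      ((v ∈ bperp B M ∧ v ∉ bperp B M ⊓ (M ⊔ bperp B S)) ∧
        GoodT B S (M ⊔ Submodule.span F {v}) s T) := by
  constructor
  · rintro ⟨⟨h1, h2, h3, h4⟩, hv, hvM⟩
    refine ⟨⟨(mem_bperp_iff _ _ _).2 fun w hw => h1 w (h3 hw) v hv, fun hh => hvM ?_⟩,
      h1, h2, sup_le h3 (by simpa using hv), h4⟩
    obtain ⟨a, ha, b, hb, rfl⟩ := Submodule.mem_sup.1 hh.2
    have hbT : b ∈ T := by simpa using T.sub_mem hv (h3 ha)
    have : b ∈ bperp B S ⊓ T := ⟨hb, hbT⟩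
    rw [h4, Submodule.mem_bot] at this
    simpa [this] using ha
  · rintro ⟨⟨hv, hvn⟩, h1, h2, h3, h4⟩
    refine ⟨⟨h1, h2, le_sup_left.trans h3, h4⟩, ?_, ?_⟩
    · exact h3 (Submodule.mem_sup_right (Submodule.mem_span_singleton_self v))
    · exact fun h => hvn ⟨hv, Submodule.mem_sup_left h⟩

lemma extend_ok {B : V →ₗ[F] V →ₗ[F] F} (halt : IsAltForm B) (S M : Submodule F V)
    (hMiso : IsTotIso B M) (hskew : M ⊓ bperp B S = ⊥) (v : V) (hv : v ∈ bperp B M)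
    (hvn : v ∉ bperp B M ⊓ (M ⊔ bperp B S)) :
    IsTotIso B (M ⊔ Submodule.span F {v}) ∧ (M ⊔ Submodule.span F {v}) ⊓ bperp B S = ⊥ := by
  rw [mem_bperp_iff] at hv
  constructor
  · intro x hx y hy
    obtain ⟨a, ha, b, hb, rfl⟩ := Submodule.mem_sup.1 hx
    obtain ⟨c, hc, d, hd, rfl⟩ := Submodule.mem_sup.1 hy
    obtain ⟨k, rfl⟩ := Submodule.mem_span_singleton.1 hb
    obtain ⟨l, rfl⟩ := Submodule.mem_span_singleton.1 hd
    simp [hMiso a ha c hc, hv a ha, halt v, altForm_swap halt _ _ (hv c hc)]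
  · rw [eq_bot_iff]
    rintro x ⟨hx, hxS⟩
    obtain ⟨a, ha, b, hb, rfl⟩ := Submodule.mem_sup.1 hx
    obtain ⟨k, rfl⟩ := Submodule.mem_span_singleton.1 hb
    by_cases hk : k = 0
    · subst hk
      rw [← hskew]
      simp only [zero_smul, add_zero] at hxS ⊢
      exact ⟨ha, hxS⟩
    · exfalso
      refine hvn ⟨(mem_bperp_iff _ _ _).2 hv, ?_⟩
      have h1 : k • v ∈ M ⊔ bperp B S := by
        have := Submodule.sub_mem _ (Submodule.mem_sup_right (S := M) hxS)
          (Submodule.mem_sup_left (T := bperp B S) ha)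
        simpa using this
      exact (Submodule.smul_mem_iff _ hk).1 h1

lemma core_count [Fintype F] [FiniteDimensional F V] [Fintype V] [Fintype (Submodule F V)]
    (n : ℕ) (B : V →ₗ[F] V →ₗ[F] F) (halt : IsAltForm B) (hnd : NondegForm B)
    (hdim : finrank F V = 2 * n) (s : ℕ) (hsn : s ≤ n)
    (S : Submodule F V) (hSiso : IsTotIso B S) (hSrank : finrank F S = s) (r : ℕ) :
    ∀ (m : ℕ) (M : Submodule F V), m + r = s → IsTotIso B M → finrank F M = m →
      M ⊓ bperp B S = ⊥ →
      (Finset.univ.filter fun T => GoodT B S M s T).card =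
        Fintype.card F ^ (∑ i ∈ Finset.range r, (2 * n - 2 * s + 1 + i)) := by
  induction r with
  | zero =>
    intro m M hm hMiso hMrank hskew
    rw [Finset.range_zero, Finset.sum_empty, pow_zero, Finset.card_eq_one]
    refine ⟨M, ?_⟩
    ext T
    simp only [Finset.mem_filter, Finset.mem_univ, true_and, Finset.mem_singleton]
    constructor
    · rintro ⟨h1, h2, h3, h4⟩
      exact (Submodule.eq_of_le_of_finrank_eq h3 (by omega)).symm
    · rintro rfl
      exact ⟨hMiso, by omega, le_rfl, by rwa [inf_comm]⟩
  | succ r ih =>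
    intro m M hm hMiso hMrank hskew
    have dc := Finset.sum_card_bipartiteAbove_eq_sum_card_bipartiteBelow
      (s := (Finset.univ : Finset (Submodule F V))) (t := (Finset.univ : Finset V))
      (fun T v => GoodT B S M s T ∧ v ∈ T ∧ v ∉ M)
    set q := Fintype.card F with hq
    set e := ∑ i ∈ Finset.range r, (2 * n - 2 * s + 1 + i) with he
    have hq1 : 1 < q := Fintype.one_lt_card
    have hL : ∀ T : Submodule F V, ((Finset.univ : Finset V).bipartiteAbove
        (fun T v => GoodT B S M s T ∧ v ∈ T ∧ v ∉ M) T).card =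
        if GoodT B S M s T then q ^ s - q ^ m else 0 := by
      intro T
      rw [Finset.bipartiteAbove]
      split_ifs with h
      · have := card_filter_sub M T h.2.2.1
        rw [h.2.1, hMrank] at this
        rw [← this]
        simp [h]
      · simp [h]
    have hR : ∀ v : V, ((Finset.univ : Finset (Submodule F V)).bipartiteBelow
        (fun T v => GoodT B S M s T ∧ v ∈ T ∧ v ∉ M) v).card =
        if (v ∈ bperp B M ∧ v ∉ bperp B M ⊓ (M ⊔ bperp B S)) then q ^ e else 0 := by
      intro v
      rw [Finset.bipartiteBelow]
      simp only [good_step]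
      split_ifs with h
      · obtain ⟨h1, h2⟩ := extend_ok halt S M hMiso hskew v h.1 h.2
        have hvM : v ∉ M := fun hh => h.2 ⟨h.1, Submodule.mem_sup_left hh⟩
        have := ih (m + 1) (M ⊔ Submodule.span F {v}) (by omega) h1
          (by rw [Submodule.finrank_sup_span_singleton hvM, hMrank]) h2
        rw [← this]
        congr 1
        ext T
        simp only [Finset.mem_filter, Finset.mem_univ, true_and]
        exact ⟨fun hh => hh.2, fun hh => ⟨h, hh⟩⟩
      · rw [Finset.card_eq_zero, Finset.filter_eq_empty_iff]
        exact fun T _ hh => h hh.1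
    have hc := card_filter_sub (bperp B M ⊓ (M ⊔ bperp B S)) (bperp B M) inf_le_left
    rw [finrank_inter halt hnd S M hSiso hMiso hskew, finrank_bperp halt hnd, hdim, hSrank,
      hMrank] at hc
    simp only [hL, hR] at dc
    rw [← Finset.sum_filter, ← Finset.sum_filter, Finset.sum_const, Finset.sum_const, hc,
      smul_eq_mul, smul_eq_mul] at dc
    have hpos : 0 < q ^ s - q ^ m := Nat.sub_pos_of_lt (Nat.pow_lt_pow_right hq1 (by omega))
    have hfac : q ^ (2 * n - m) - q ^ (2 * n - s) =
        q ^ (2 * n - 2 * s + 1 + r) * (q ^ s - q ^ m) := by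
      rw [Nat.mul_sub, ← pow_add, ← pow_add]
      congr 2 <;> omega
    rw [hfac] at dc
    apply Nat.eq_of_mul_eq_mul_right hpos
    rw [dc, Finset.sum_range_succ, pow_add]
    ring

lemma exponent_eq (n m s : ℕ) (hms : m ≤ s) (hsn : s ≤ n) :
    ∑ i ∈ Finset.range (s - m), (2 * n - 2 * s + 1 + i) =
      (s - m) * (2 * n - s - m + 1) - (s - m) * ((s - m) + 1) / 2 := by
  obtain ⟨r, rfl⟩ := Nat.exists_eq_add_of_le hms
  obtain ⟨k, rfl⟩ := Nat.exists_eq_add_of_le hsn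
  have e1 : m + r - m = r := by omega
  have e2 : 2 * (m + r + k) - 2 * (m + r) + 1 = 2 * k + 1 := by omega
  have e3 : 2 * (m + r + k) - (m + r) - m + 1 = 2 * k + 1 + r := by omega
  rw [e1, e2, e3]
  have h : ∀ r : ℕ, 2 * ∑ i ∈ Finset.range r, (2 * k + 1 + i) + r * (r + 1) =
      2 * (r * (2 * k + 1 + r)) := by
    intro r
    induction r with
    | zero => simp
    | succ r ih => rw [Finset.sum_range_succ]; linarith
  have := h r
  omega

end Helpers

/-- if `M` is a totally isotropic `m`-space with `M ∩ S^⊥ = 0` for a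
totally isotropic `s`-space `S`, then the number of totally isotropic `s`-spaces
through `M` opposite to `S` is `q^{(s-m)(2n-s-m+1)-(s-m)(s-m+1)/2}`. -/
theorem stmt_17 {F V : Type} [Field F] [Fintype F] [AddCommGroup V] [Module F V]
    [FiniteDimensional F V] (n q : ℕ) (hn : 3 ≤ n) (hq : Fintype.card F = q)
    (B : V →ₗ[F] V →ₗ[F] F) (halt : IsAltForm B) (hnd : NondegForm B)
    (hdim : Module.finrank F V = 2 * n)
    (m s : ℕ) (hm : 1 ≤ m) (hms : m ≤ s) (hsn : s ≤ n)
    (S : Submodule F V) (hSiso : IsTotIso B S) (hSrank : Module.finrank F S = s)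
    (M : Submodule F V) (hMiso : IsTotIso B M) (hMrank : Module.finrank F M = m)
    (hskew : M ⊓ bperp B S = ⊥) :
    Nat.card {T : Submodule F V // IsTotIso B T ∧ Module.finrank F T = s ∧
        M ≤ T ∧ bperp B S ⊓ T = ⊥} =
      q ^ ((s - m) * (2 * n - s - m + 1) - (s - m) * ((s - m) + 1) / 2) := by
  have : Finite V := Module.finite_of_finite F
  have : Fintype V := Fintype.ofFinite V
  have : Fintype (Submodule F V) := Fintype.ofFinite _
  have h := core_count n B halt hnd hdim s hsn S hSiso hSrank (s - m) m M (by omega) hMiso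
    hMrank hskew
  rw [hq, exponent_eq n m s hms hsn] at h
  rw [← h, Nat.card_eq_fintype_card, Fintype.card_subtype]
  congr 1
  ext T
  simp only [Finset.mem_filter, Finset.mem_univ, true_and]
  exact Iff.rfl
end

section
/- Let 1 ≤ s ≤ n−1, let P be a point (a totally isotropic 1-space) and let S and T be totally isotropic s-spaces of the symplectic polar space of rank n with P ⊄ S, P ⊄ T, S ⊆ P^⊥ and T ⊆ P^⊥. Then S^⊥ ∩ T = {0} if and only if (P + S)^⊥ ∩ (P + T) = P. -/
open scoped Classical

open Module

theorem mem_bperp_aux {F V : Type} [Field F] [AddCommGroup V] [Module F V]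
    (B : V →ₗ[F] V →ₗ[F] F) (W : Submodule F V) (x : V) :
    x ∈ bperp B W ↔ ∀ w ∈ W, B w x = 0 := by
  simp [bperp, Submodule.mem_iInf]

/-- for a point `P` and totally isotropic `s`-spaces `S, T ⊆ P^⊥` not
containing `P`, `S` and `T` are opposite iff `(P+S)^⊥ ∩ (P+T) = P`. -/
theorem stmt_18 {F V : Type} [Field F] [Fintype F] [AddCommGroup V] [Module F V]
    [FiniteDimensional F V] (n q : ℕ) (hn : 3 ≤ n) (hq : Fintype.card F = q)
    (B : V →ₗ[F] V →ₗ[F] F) (halt : IsAltForm B) (hnd : NondegForm B)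
    (hdim : Module.finrank F V = 2 * n)
    (s : ℕ) (hs1 : 1 ≤ s) (hsn : s ≤ n - 1)
    (P : Submodule F V) (hPiso : IsTotIso B P) (hPrank : Module.finrank F P = 1)
    (S : Submodule F V) (hSiso : IsTotIso B S) (hSrank : Module.finrank F S = s)
    (T : Submodule F V) (hTiso : IsTotIso B T) (hTrank : Module.finrank F T = s)
    (hPS : ¬ P ≤ S) (hPT : ¬ P ≤ T)
    (hSperp : S ≤ bperp B P) (hTperp : T ≤ bperp B P) :
    bperp B S ⊓ T = ⊥ ↔ bperp B (P ⊔ S) ⊓ (P ⊔ T) = P := by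
  have hsymm : ∀ u v, B u v = 0 → B v u = 0 := by
    intro u v h
    have h1 := halt (u + v)
    simp only [map_add, LinearMap.add_apply, halt u, halt v, h] at h1
    simpa using h1
  have hSP : ∀ a ∈ S, ∀ p ∈ P, B a p = 0 := fun a ha p hp =>
    hsymm _ _ ((mem_bperp_aux B P a).1 (hSperp ha) p hp)
  constructor
  · intro h
    apply le_antisymm
    · rintro x ⟨hx1, hx2⟩
      obtain ⟨p, hp, t, ht, rfl⟩ := Submodule.mem_sup.1 hx2
      have hx1' := (mem_bperp_aux B _ _).1 hx1
      have h0 : t ∈ bperp B S ⊓ T := by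
        refine ⟨(mem_bperp_aux B _ _).2 fun a ha => ?_, ht⟩
        have h2 := hx1' a (Submodule.mem_sup_right ha)
        rw [map_add, hSP a ha p hp, zero_add] at h2
        exact h2
      rw [h, Submodule.mem_bot] at h0
      rw [h0, add_zero]
      exact hp
    · intro p hp
      refine ⟨(mem_bperp_aux B _ _).2 fun w hw => ?_, Submodule.mem_sup_left hp⟩
      obtain ⟨p', hp', a, ha, rfl⟩ := Submodule.mem_sup.1 hw
      rw [map_add, LinearMap.add_apply, hPiso p' hp' p hp, hSP a ha p hp, add_zero]
  · intro h
    rw [eq_bot_iff]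
    rintro t ⟨ht1, ht⟩
    have htP : t ∈ P := by
      rw [← h]
      refine ⟨(mem_bperp_aux B _ _).2 fun w hw => ?_, Submodule.mem_sup_right ht⟩
      obtain ⟨p', hp', a, ha, rfl⟩ := Submodule.mem_sup.1 hw
      rw [map_add, LinearMap.add_apply, (mem_bperp_aux B _ _).1 (hTperp ht) p' hp',
        (mem_bperp_aux B _ _).1 ht1 a ha, add_zero]
    rw [Submodule.mem_bot]
    by_contra h0
    apply hPT
    intro p hp
    obtain ⟨c, hc⟩ := (finrank_eq_one_iff_of_nonzero' (⟨t, htP⟩ : P)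
      (by simpa using h0)).1 hPrank ⟨p, hp⟩
    have hc' : c • t = p := congrArg Subtype.val hc
    rw [← hc']
    exact T.smul_mem c ht
end

section
/- Let 1 ≤ s ≤ n−1 and let P be a point (a totally isotropic 1-space) of the symplectic polar space of rank n. If 𝓕̃ is a set of totally isotropic s-spaces, each contained in P^⊥ and none containing P, such that no two members of 𝓕̃ are opposite, then |𝓕̃| ≤ q^s · [ (n−1) choose s ]_q · ∏_{i=1}^{s−1} (q^{n−1−i} + 1). -/
open scoped Classical

open Module

namespace EKR

/-- Counting extensions of tuples, one coordinate at a time. -/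
theorem ext_count {W : Type} [Fintype W] (Q : ∀ t, (Fin t → W) → Prop) (r : ℕ → ℕ)
    (hQ : ∀ t (Z : Fin (t+1) → W), Q (t+1) Z → Q t (Fin.init Z)) (s : ℕ)
    (hr : ∀ t, t < s → ∀ Y : Fin t → W, Q t Y →
      (Finset.univ.filter fun w : W => Q (t+1) (Fin.snoc Y w)).card = r t) :
    ∀ l k, k + l ≤ s → ∀ Y : Fin k → W, Q k Y →
      (Finset.univ.filter fun Z : Fin (k+l) → W =>
        Q (k+l) Z ∧ (fun i => Z (Fin.castAdd l i)) = Y).card = ∏ j ∈ Finset.range l, r (k+j) := by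
  intro l
  induction l with
  | zero =>
    intro k hk Y hY
    rw [Finset.range_zero, Finset.prod_empty, Finset.card_eq_one]
    refine ⟨Y, ?_⟩
    ext Z
    simp only [Finset.mem_filter, Finset.mem_univ, true_and, Finset.mem_singleton]
    constructor
    · rintro ⟨_, h⟩; exact h
    · rintro rfl; exact ⟨hY, rfl⟩
  | succ l ih =>
    intro k hk Y hY
    rw [Finset.prod_range_succ, ← ih k (by omega) Y hY, Finset.card_eq_sum_card_fiberwise
      (f := fun Z : Fin (k+l+1) → W => (Fin.init Z : Fin (k+l) → W))
      (t := Finset.univ.filter fun Z : Fin (k+l) → W =>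
        Q (k+l) Z ∧ (fun i => Z (Fin.castAdd l i)) = Y)]
    · rw [Finset.sum_const_nat (m := r (k+l))]
      intro Z hZ
      simp only [Finset.mem_filter, Finset.mem_univ, true_and] at hZ
      rw [← hr (k+l) (by omega) Z hZ.1]
      refine Finset.card_bij' (fun Z' _ => Z' (Fin.last _))
        (fun w _ => (Fin.snoc Z w : Fin (k+l+1) → W)) ?_ ?_ ?_ ?_
      · intro Z' h
        simp only [Finset.mem_filter, Finset.mem_univ, true_and] at h ⊢
        rw [← h.2, Fin.snoc_init_self]; exact h.1.1
      · intro w h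
        simp only [Finset.mem_filter, Finset.mem_univ, true_and] at h ⊢
        refine ⟨⟨h, ?_⟩, by simp⟩
        rw [← hZ.2]
        funext i
        exact Fin.snoc_castSucc (α := fun _ => W) w Z (Fin.castAdd l i)
      · intro Z' h
        simp only [Finset.mem_filter, Finset.mem_univ, true_and] at h
        rw [← h.2, Fin.snoc_init_self]
      · intro w h
        simp
    · intro Z hZ
      simp only [Finset.coe_filter, Finset.mem_univ, true_and, Set.mem_ofPred_eq] at hZ ⊢
      refine ⟨hQ _ _ hZ.1, ?_⟩
      rw [← hZ.2]
      rfl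

section Fourier
variable {F : Type} [Field F] [Fintype F]

theorem exists_char : ∃ ψ : AddChar F ℂ, ψ ≠ 1 := by
  refine ⟨AddChar.FiniteField.primitiveChar_to_Complex F, ?_⟩
  have := AddChar.FiniteField.primitiveChar_to_Complex_isPrimitive F (one_ne_zero)
  simpa [AddChar.mulShift_one] using this

theorem sum_char {E : Type} [AddCommGroup E] [Module F E] [Fintype E] (ψ : AddChar F ℂ)
    (hψ : ψ ≠ 1) (φ : E →ₗ[F] F) :
    ∑ e, ψ (φ e) = if φ = 0 then (Fintype.card E : ℂ) else 0 := by
  split_ifs with h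
  · subst h; simp
  · have h2 := AddChar.sum_eq_zero_of_ne_one (ψ := ψ.compAddMonoidHom φ.toAddMonoidHom) ?_
    · simpa using h2
    · obtain ⟨a, ha⟩ := AddChar.ne_one_iff.1 hψ
      have : ∃ e, φ e ≠ 0 := by
        by_contra hc; push Not at hc; exact h (LinearMap.ext hc)
      obtain ⟨e, he⟩ := this
      refine AddChar.ne_one_iff.2 ⟨(a / φ e) • e, ?_⟩
      simpa [he] using ha

theorem sum_char_submodule {E : Type} [AddCommGroup E] [Module F E] [Fintype E] (ψ : AddChar F ℂ)
    (hψ : ψ ≠ 1) (φ : E →ₗ[F] F) (S : Submodule F E) :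
    ∑ e ∈ Finset.univ.filter (· ∈ S), ψ (φ e)
      = if S ≤ LinearMap.ker φ then (Fintype.card S : ℂ) else 0 := by
  have := sum_char ψ hψ (φ.domRestrict S)
  have e1 : (φ.domRestrict S = 0) ↔ S ≤ LinearMap.ker φ := by
    constructor
    · intro h x hx
      exact LinearMap.congr_fun h ⟨x, hx⟩
    · intro h
      ext x
      exact h x.2
  simp only [e1] at this
  rw [← this]
  exact Finset.sum_subtype _ (by simp) (fun e => ψ (φ e))

/-- Plancherel. -/
theorem plancherel {E : Type} [AddCommGroup E] [Module F E] [Fintype E] (ψ : AddChar F ℂ)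
    (hψ : ψ ≠ 1) (β : E →ₗ[F] E →ₗ[F] F) (hβ : ∀ x, β x = 0 → x = 0) (h : E → ℝ) :
    ∑ y, ‖∑ x, (h x : ℂ) * ψ (β x y)‖ ^ 2 = Fintype.card E * ∑ x, h x ^ 2 := by
  have key : ∑ y, ((∑ x, (h x : ℂ) * ψ (β x y)) * (starRingEnd ℂ) (∑ x, (h x : ℂ) * ψ (β x y)))
      = Fintype.card E * ∑ x, (h x : ℂ) ^ 2 := by
    have e1 : ∀ y, (∑ x, (h x : ℂ) * ψ (β x y)) * (starRingEnd ℂ) (∑ x, (h x : ℂ) * ψ (β x y))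
        = ∑ x, ∑ x', (h x : ℂ) * h x' * ψ (β (x - x') y) := by
      intro y
      rw [map_sum, Finset.sum_mul_sum]
      refine Finset.sum_congr rfl fun x _ => Finset.sum_congr rfl fun x' _ => ?_
      rw [map_mul, Complex.conj_ofReal, map_sub, LinearMap.sub_apply, sub_eq_add_neg,
        AddChar.map_add_eq_mul, AddChar.map_neg_eq_conj]
      ring
    simp only [e1]
    rw [Finset.sum_comm, Finset.mul_sum]
    refine Finset.sum_congr rfl fun x _ => ?_
    rw [Finset.sum_comm, Finset.sum_eq_single x]
    · simp; ring
    · intro x' _ hx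
      rw [← Finset.mul_sum, sum_char ψ hψ, if_neg, mul_zero]
      intro h0
      exact hx (sub_eq_zero.1 (hβ _ h0)).symm
    · simp
  simp only [Complex.mul_conj, Complex.normSq_eq_norm_sq] at key
  exact_mod_cast key

/-- The character sum over linearly independent tuples. -/
theorem char_sum_li (ψ : AddChar F ℂ) (hψ : ψ ≠ 1) (k : ℕ) :
    ∀ (E : Type) [AddCommGroup E] [Module F E] [Fintype E] (w : Fin k → (E →ₗ[F] F)),
      LinearIndependent F w →
      ‖∑ M ∈ Finset.univ.filter (fun M : Fin k → E => LinearIndependent F M), ψ (∑ j, w j (M j))‖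
        ≤ (Fintype.card F : ℝ) ^ (k.choose 2) := by
  induction k with
  | zero =>
    intro E _ _ _ w hw
    refine (norm_sum_le _ _).trans ?_
    simp
  | succ k ih =>
    intro E _ _ _ w hw
    have : FiniteDimensional F E := Module.Finite.of_finite
    have hw0 : w 0 ≠ 0 := hw.ne_zero 0
    have hwt : LinearIndependent F (fun j : Fin k => w j.succ) :=
      hw.comp _ (Fin.succ_injective k)
    have step : ∑ M ∈ Finset.univ.filter (fun M : Fin (k+1) → E => LinearIndependent F M),
          ψ (∑ j, w j (M j))
        = - (Fintype.card F : ℂ) ^ k *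
          ∑ M ∈ Finset.univ.filter (fun M : Fin k → LinearMap.ker (w 0) => LinearIndependent F M),
            ψ (∑ j, ((w j.succ).domRestrict (LinearMap.ker (w 0))) (M j)) := by
      rw [Finset.sum_filter, ← (Fin.consEquiv (fun _ => E)).sum_comp, Fintype.sum_prod_type_right]
      have inner : ∀ v : Fin k → E,
          (∑ x : E, if LinearIndependent F (Fin.consEquiv (fun _ => E) (x, v)) then
            ψ (∑ j, w j (Fin.consEquiv (fun _ => E) (x, v) j)) else 0)
          = if LinearIndependent F v ∧ ∀ j, w 0 (v j) = 0 then
            - (Fintype.card F : ℂ) ^ k * ψ (∑ j, w j.succ (v j)) else 0 := by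
        intro v
        by_cases hv : LinearIndependent F v
        · have e1 : ∀ x : E, (if LinearIndependent F (Fin.consEquiv (fun _ => E) (x, v)) then
              ψ (∑ j, w j (Fin.consEquiv (fun _ => E) (x, v) j)) else 0)
              = ψ (∑ j, w j.succ (v j)) *
                (ψ (w 0 x) - if x ∈ Submodule.span F (Set.range v) then ψ (w 0 x) else 0) := by
            intro x
            have : LinearIndependent F (Fin.consEquiv (fun _ => E) (x, v)) ↔
              x ∉ Submodule.span F (Set.range v) := by
              have := linearIndependent_finCons (K := F) (x := x) (v := v)
              rw [show (Fin.consEquiv (fun _ => E) (x, v)) = Fin.cons x v from rfl, this]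
              simp [hv]
            simp only [this, Fin.sum_univ_succ]
            by_cases hx : x ∈ Submodule.span F (Set.range v)
            · simp [hx]
            · simp [hx, AddChar.map_add_eq_mul, mul_comm]
          simp only [e1]
          rw [← Finset.mul_sum, Finset.sum_sub_distrib, sum_char ψ hψ, if_neg hw0,
            ← Finset.sum_filter, sum_char_submodule ψ hψ]
          have e2 : Submodule.span F (Set.range v) ≤ LinearMap.ker (w 0) ↔ ∀ j, w 0 (v j) = 0 := by
            rw [Submodule.span_le, Set.range_subset_iff]; rfl
          have e3 : Fintype.card (Submodule.span F (Set.range v)) = Fintype.card F ^ k := by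
            rw [Module.card_eq_pow_finrank (K := F), finrank_span_eq_card hv, Fintype.card_fin]
          simp only [e2, e3, hv, true_and]
          split_ifs <;> push_cast <;> ring
        · have : ∀ x, ¬ LinearIndependent F (Fin.consEquiv (fun _ => E) (x, v)) := by
            intro x hx
            apply hv
            exact hx.comp _ (Fin.succ_injective k)
          simp [this, hv]
      simp only [inner]
      rw [← Finset.sum_filter, Finset.mul_sum]
      symm
      refine Finset.sum_bij' (fun M _ j => (M j : E))
        (fun v hv j => ⟨v j, by
          simp only [Finset.mem_filter, Finset.mem_univ, true_and] at hv; exact hv.2 j⟩) ?_ ?_ ?_ ?_ ?_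
      · intro M hM
        simp only [Finset.mem_filter, Finset.mem_univ, true_and] at hM ⊢
        exact ⟨hM.map' (LinearMap.ker (w 0)).subtype (Submodule.ker_subtype _), fun j => (M j).2⟩
      · intro v hv
        simp only [Finset.mem_filter, Finset.mem_univ, true_and] at hv ⊢
        exact LinearIndependent.of_comp (LinearMap.ker (w 0)).subtype hv.1
      · intro M hM; rfl
      · intro M hM; rfl
      · intro M hM; rfl
    have hres : LinearIndependent F
        (fun j : Fin k => (w j.succ).domRestrict (LinearMap.ker (w 0))) := by
      rw [Fintype.linearIndependent_iff]
      intro c hc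
      have hmem : (∑ j, c j • w j.succ) ∈ Submodule.span F (Set.range (fun _ : Fin 1 => w 0)) := by
        apply mem_span_of_iInf_ker_le_ker
        intro x hx
        simp only [ciInf_const] at hx
        have := LinearMap.congr_fun hc ⟨x, hx⟩
        simpa using this
      simp only [Set.range_const] at hmem
      rw [Submodule.mem_span_singleton] at hmem
      obtain ⟨a, ha⟩ := hmem
      have := (Fintype.linearIndependent_iff.1 hw) (Fin.cons (-a) c) (by
        rw [Fin.sum_univ_succ]; simp [← ha])
      intro j
      simpa using this j.succ
    rw [step, norm_mul, Nat.choose_succ_succ' k 1, Nat.choose_one_right, pow_add]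
    refine mul_le_mul (by simp) (ih _ _ hres) (norm_nonneg _) (by positivity)

end Fourier
end EKR

namespace EKR
section Symp
variable {F W : Type} [Field F] [AddCommGroup W] [Module F W]

/-- Isotropic tuples. -/
def Iso (B : W →ₗ[F] W →ₗ[F] F) {t : ℕ} (Y : Fin t → W) : Prop := ∀ i j, B (Y i) (Y j) = 0

/-- Isotropic frames. -/
def Fr (B : W →ₗ[F] W →ₗ[F] F) {t : ℕ} (Y : Fin t → W) : Prop :=
  LinearIndependent F Y ∧ Iso B Y

/-- The columns of the Gram matrix of `X` and `Y`. -/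
def cols (B : W →ₗ[F] W →ₗ[F] F) {s t : ℕ} (X : Fin s → W) (Y : Fin t → W) :
    Fin t → Fin s → F := fun j i => B (X i) (Y j)

/-- Opposite tuples. -/
def Opp (B : W →ₗ[F] W →ₗ[F] F) {s t : ℕ} (X : Fin s → W) (Y : Fin t → W) : Prop :=
  LinearIndependent F (cols B X Y)

theorem Fr.init {B : W →ₗ[F] W →ₗ[F] F} {t : ℕ} {Y : Fin (t+1) → W} (h : Fr B Y) :
    Fr B (Fin.init Y : Fin t → W) :=
  ⟨h.1.comp _ (Fin.castSucc_injective t), fun _ _ => h.2 _ _⟩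

theorem Opp.init {B : W →ₗ[F] W →ₗ[F] F} {s t : ℕ} {X : Fin s → W} {Y : Fin (t+1) → W}
    (h : Opp B X Y) : Opp B X (Fin.init Y : Fin t → W) :=
  LinearIndependent.comp h _ (Fin.castSucc_injective t)

theorem Opp.li {B : W →ₗ[F] W →ₗ[F] F} {s t : ℕ} {X : Fin s → W} {Y : Fin t → W}
    (h : Opp B X Y) : LinearIndependent F Y := by
  let L : W →ₗ[F] (Fin s → F) := LinearMap.pi fun i => B (X i)
  exact LinearIndependent.of_comp L h

theorem Opp.sum_li {B : W →ₗ[F] W →ₗ[F] F} {s t : ℕ} {X : Fin s → W} {Y : Fin t → W}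
    (hX : Fr B X) (h : Opp B X Y) : LinearIndependent F (Sum.elim X Y) := by
  rw [Fintype.linearIndependent_iff]
  intro c hc
  simp only [Fintype.sum_sum_type, Sum.elim_inl, Sum.elim_inr] at hc
  have hr : ∀ j, c (Sum.inr j) = 0 := by
    refine Fintype.linearIndependent_iff.1 h (fun j => c (Sum.inr j)) ?_
    funext i
    have := congrArg (B (X i)) hc
    simp only [map_add, map_sum, map_smul, hX.2 i, smul_zero, Finset.sum_const_zero, zero_add,
      map_zero] at this
    simpa [cols] using this
  have hl : ∀ j, c (Sum.inl j) = 0 := by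
    refine Fintype.linearIndependent_iff.1 hX.1 (fun j => c (Sum.inl j)) ?_
    simpa [hr] using hc
  rintro (j | j)
  · exact hl j
  · exact hr j

theorem pi_surj [FiniteDimensional F W] {B : W →ₗ[F] W →ₗ[F] F}
    (hnd : ∀ v, (∀ w, B v w = 0) → v = 0) {ι : Type} [Fintype ι] {Y : ι → W}
    (hY : LinearIndependent F Y) :
    Function.Surjective (LinearMap.pi (fun i => B (Y i)) : W →ₗ[F] (ι → F)) := by
  rw [← LinearMap.range_eq_top]
  by_contra hne
  obtain ⟨φ, hφ0, hφ⟩ := Submodule.exists_dual_map_eq_bot_of_lt_top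
    (lt_top_iff_ne_top.2 hne) inferInstance
  apply hφ0
  have hz : ∀ w, φ (LinearMap.pi (fun i => B (Y i)) w) = 0 := by
    intro w
    have : φ (LinearMap.pi (fun i => B (Y i)) w) ∈ Submodule.map φ
      (LinearMap.range (LinearMap.pi (fun i => B (Y i)) : W →ₗ[F] (ι → F))) :=
      Submodule.mem_map_of_mem ⟨w, rfl⟩
    rw [hφ] at this
    exact (Submodule.mem_bot F).1 this
  have hc := Fintype.linearIndependent_iff.1 hY (fun i => φ (Pi.single i 1)) (by
    apply hnd
    intro w
    rw [← hz w]
    conv_rhs => rw [LinearMap.pi_apply_eq_sum_univ φ]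
    simp only [map_sum, map_smul, LinearMap.sum_apply, LinearMap.smul_apply, smul_eq_mul,
      LinearMap.pi_apply]
    refine Finset.sum_congr rfl fun i _ => ?_
    rw [mul_comm]
    congr 2
    funext j
    simp [Pi.single_apply, eq_comm])
  apply LinearMap.pi_ext'
  intro i
  ext
  simpa using hc i

theorem card_preimage [Fintype W] {E : Type} [AddCommGroup E] [Module F E] [Fintype E]
    (φ : W →ₗ[F] E) (hφ : Function.Surjective φ) (T : Finset E) :
    (Finset.univ.filter fun w => φ w ∈ T).card = T.card * Fintype.card (LinearMap.ker φ) := by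
  rw [Finset.card_eq_sum_card_fiberwise (f := φ) (t := T) (by intro w hw; simpa using hw)]
  rw [Finset.sum_const_nat (m := Fintype.card (LinearMap.ker φ))]
  intro e he
  obtain ⟨w0, rfl⟩ := hφ e
  rw [← Finset.card_univ]
  refine Finset.card_bij' (fun w hw => ⟨w - w0, ?_⟩) (fun k _ => (k : W) + w0) ?_ ?_ ?_ ?_
  · simp only [Finset.mem_filter, Finset.mem_univ, true_and] at hw
    simp [hw.2]
  · intro w hw; simp
  · intro k _
    have : φ k = 0 := k.2
    simp [this, he]
  · intro w hw; simp
  · intro k _; simp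

variable [Fintype F] [Fintype W]

theorem card_ker_pi {B : W →ₗ[F] W →ₗ[F] F}
    (hnd : ∀ v, (∀ w, B v w = 0) → v = 0) {ι : Type} [Fintype ι] {Y : ι → W}
    (hY : LinearIndependent F Y) :
    Fintype.card (LinearMap.ker (LinearMap.pi (fun i => B (Y i)) : W →ₗ[F] (ι → F)))
      = Fintype.card F ^ (finrank F W - Fintype.card ι) := by
  have : FiniteDimensional F W := Module.Finite.of_finite
  rw [Module.card_eq_pow_finrank (K := F)]
  congr 1
  have h1 := LinearMap.finrank_range_add_finrank_ker
    (LinearMap.pi (fun i => B (Y i)) : W →ₗ[F] (ι → F))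
  rw [LinearMap.range_eq_top.2 (pi_surj hnd hY), finrank_top, Module.finrank_fintype_fun_eq_card] at h1
  omega

theorem card_not_mem_span {E : Type} [AddCommGroup E] [Module F E] [Fintype E] {t : ℕ}
    {Y : Fin t → E} (hY : LinearIndependent F Y) (S : Submodule F E)
    (hS : Submodule.span F (Set.range Y) ≤ S) :
    (Finset.univ.filter fun w : E => w ∈ S ∧ w ∉ Submodule.span F (Set.range Y)).card
      = Fintype.card S - Fintype.card F ^ t := by
  have e1 : (Finset.univ.filter fun w : E => w ∈ S ∧ w ∉ Submodule.span F (Set.range Y))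
      = (Finset.univ.filter fun w : E => w ∈ S) \
        (Finset.univ.filter fun w : E => w ∈ Submodule.span F (Set.range Y)) := by
    ext w; simp
  rw [e1, Finset.card_sdiff_of_subset]
  · have e3 : Fintype.card (Submodule.span F (Set.range Y)) = Fintype.card F ^ t := by
      rw [Module.card_eq_pow_finrank (K := F), finrank_span_eq_card hY, Fintype.card_fin]
    rw [← e3, Fintype.card_subtype, Fintype.card_subtype]
  · intro w; simpa using @hS w

theorem count_fr {B : W →ₗ[F] W →ₗ[F] F} (halt : ∀ v, B v v = 0)
    (hnd : ∀ v, (∀ w, B v w = 0) → v = 0) {t : ℕ} {Y : Fin t → W} (hY : Fr B Y) :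
    (Finset.univ.filter fun w : W => Fr B (Fin.snoc Y w : Fin (t+1) → W)).card
      = Fintype.card F ^ (finrank F W - t) - Fintype.card F ^ t := by
  have hsk : ∀ x y, B x y = 0 → B y x = 0 := by
    intro x y h
    have := halt (x + y)
    simpa [halt, h] using this
  have e := card_ker_pi hnd hY.1
  rw [Fintype.card_fin] at e
  rw [← e, ← card_not_mem_span hY.1 (LinearMap.ker (LinearMap.pi (fun i => B (Y i)) : W →ₗ[F] (Fin t → F)))]
  · congr 1
    ext w
    simp only [Finset.mem_filter, Finset.mem_univ, true_and, Fr, linearIndependent_finSnoc]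
    constructor
    · rintro ⟨⟨h1, h2⟩, h3⟩
      refine ⟨?_, h2⟩
      rw [LinearMap.mem_ker]
      funext i
      have := h3 i.castSucc (Fin.last t)
      simpa using this
    · rintro ⟨h1, h2⟩
      refine ⟨⟨hY.1, h2⟩, ?_⟩
      have h1' : ∀ i, B (Y i) w = 0 := fun i => congrFun h1 i
      intro i j
      induction i using Fin.lastCases with
      | last =>
        induction j using Fin.lastCases with
        | last => simp [halt]
        | cast j => simpa using hsk _ _ (h1' j)
      | cast i =>
        induction j using Fin.lastCases with
        | last => simpa using h1' i
        | cast j => simpa using hY.2 i j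
  · rw [Submodule.span_le]
    rintro _ ⟨j, rfl⟩
    change _ = _
    funext i
    exact hY.2 i j

theorem count_opp {B : W →ₗ[F] W →ₗ[F] F} (halt : ∀ v, B v v = 0)
    (hnd : ∀ v, (∀ w, B v w = 0) → v = 0) {s t : ℕ} {X : Fin s → W} (hX : Fr B X)
    {Y : Fin t → W} (hY : Fr B Y) (hXY : Opp B X Y) :
    (Finset.univ.filter fun w : W => Fr B (Fin.snoc Y w : Fin (t+1) → W) ∧
      Opp B X (Fin.snoc Y w : Fin (t+1) → W)).card
      = (Fintype.card F ^ s - Fintype.card F ^ t) * Fintype.card F ^ (finrank F W - (s + t)) := by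
  have : FiniteDimensional F W := Module.Finite.of_finite
  have hsk : ∀ x y, B x y = 0 → B y x = 0 := by
    intro x y h
    have := halt (x + y)
    simpa [halt, h] using this
  have hli := Opp.sum_li hX hXY
  have e := card_ker_pi hnd hli
  rw [Fintype.card_sum, Fintype.card_fin, Fintype.card_fin] at e
  have hT := card_not_mem_span (F := F) (Y := cols B X Y) hXY ⊤ le_top
  have hcard : Fintype.card (⊤ : Submodule F (Fin s → F)) = Fintype.card F ^ s := by
    rw [Module.card_eq_pow_finrank (K := F), finrank_top]; simp
  rw [hcard] at hT
  rw [← e, ← hT]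
  rw [← Finset.card_image_of_injective (f := fun a : Fin s → F => (Sum.elim a 0 : Fin s ⊕ Fin t → F))]
  · rw [← card_preimage _ (pi_surj hnd hli)]
    congr 1
    ext w
    simp only [Finset.mem_filter, Finset.mem_univ, true_and, Finset.mem_image, Submodule.mem_top]
    have hc : cols B X (Fin.snoc Y w : Fin (t+1) → W) = Fin.snoc (cols B X Y) (fun i => B (X i) w) := by
      funext j
      induction j using Fin.lastCases with
      | last => funext i; simp [cols]
      | cast j => funext i; simp [cols]
    have hO : Opp B X (Fin.snoc Y w : Fin (t+1) → W) ↔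
        (fun i => B (X i) w) ∉ Submodule.span F (Set.range (cols B X Y)) := by
      rw [Opp, hc, linearIndependent_finSnoc]
      exact and_iff_right hXY
    constructor
    · rintro ⟨h1, h2⟩
      refine ⟨fun i => B (X i) w, hO.1 h2, ?_⟩
      funext i
      rcases i with i | i
      · simp
      · have := h1.2 i.castSucc (Fin.last t)
        simpa using this.symm
    · rintro ⟨a, ha, hw⟩
      have ha' : ∀ i, B (X i) w = a i := fun i => by
        have := congrFun hw (Sum.inl i); simpa using this.symm
      have h1' : ∀ i, B (Y i) w = 0 := fun i => by
        have := congrFun hw (Sum.inr i); simpa using this.symm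
      have hopp : Opp B X (Fin.snoc Y w : Fin (t+1) → W) := by
        rw [hO, funext ha']; exact ha
      refine ⟨⟨hopp.li, ?_⟩, hopp⟩
      intro i j
      induction i using Fin.lastCases with
      | last =>
        induction j using Fin.lastCases with
        | last => simp [halt]
        | cast j => simpa using hsk _ _ (h1' j)
      | cast i =>
        induction j using Fin.lastCases with
        | last => simpa using h1' i
        | cast j => simpa using hY.2 i j
  · intro a b hab
    funext i
    exact congrFun hab (Sum.inl i)

/-- Number of isotropic frames. -/
theorem card_fr {B : W →ₗ[F] W →ₗ[F] F} (halt : ∀ v, B v v = 0)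
    (hnd : ∀ v, (∀ w, B v w = 0) → v = 0) (s : ℕ) :
    (Finset.univ.filter fun X : Fin s → W => Fr B X).card
      = ∏ j ∈ Finset.range s, (Fintype.card F ^ (finrank F W - j) - Fintype.card F ^ j) := by
  have := ext_count (fun t (Y : Fin t → W) => Fr B Y)
    (fun j => Fintype.card F ^ (finrank F W - j) - Fintype.card F ^ j)
    (fun t Z h => h.init) s (fun t _ Y hY => count_fr halt hnd hY) s 0 (by omega) (fun i => i.elim0)
    ⟨linearIndependent_empty_type, fun i => i.elim0⟩
  simp only [zero_add] at this
  rw [← this]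
  have e : ∀ s' (h : s' = s), (Finset.univ.filter fun X : Fin s → W => Fr B X).card =
      (Finset.univ.filter fun X : Fin s' → W => Fr B X).card := by rintro _ rfl; rfl
  rw [e (0+s) (by omega)]
  congr 1
  ext Z
  simp only [Finset.mem_filter, Finset.mem_univ, true_and]
  refine ⟨fun h => ⟨h, funext fun i => i.elim0⟩, fun h => h.1⟩

/-- Number of opposite isotropic extensions. -/
theorem card_opp_ext {B : W →ₗ[F] W →ₗ[F] F} (halt : ∀ v, B v v = 0)
    (hnd : ∀ v, (∀ w, B v w = 0) → v = 0) {s k : ℕ} (hk : k ≤ s) {X : Fin s → W} (hX : Fr B X)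
    {Y : Fin k → W} (hY : Fr B Y) (hXY : Opp B X Y) :
    (Finset.univ.filter fun Z : Fin s → W => (Fr B Z ∧ Opp B X Z) ∧
        (fun i => Z (Fin.castLE hk i)) = Y).card
      = ∏ j ∈ Finset.Ico k s, ((Fintype.card F ^ s - Fintype.card F ^ j) *
          Fintype.card F ^ (finrank F W - (s + j))) := by
  have := ext_count (fun t (Y : Fin t → W) => Fr B Y ∧ Opp B X Y)
    (fun j => (Fintype.card F ^ s - Fintype.card F ^ j) *
          Fintype.card F ^ (finrank F W - (s + j)))
    (fun t Z h => ⟨h.1.init, h.2.init⟩) s (fun t _ Y hY => by convert count_opp halt hnd hX hY.1 hY.2)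
    (s - k) k (by omega) Y ⟨hY, hXY⟩
  rw [Finset.prod_Ico_eq_prod_range, ← this]
  have e : ∀ s' (h : s' = s) (hk' : k ≤ s'),
      (Finset.univ.filter fun Z : Fin s → W => (Fr B Z ∧ Opp B X Z) ∧
        (fun i => Z (Fin.castLE hk i)) = Y).card =
      (Finset.univ.filter fun Z : Fin s' → W => (Fr B Z ∧ Opp B X Z) ∧
        (fun i => Z (Fin.castLE hk' i)) = Y).card := by rintro _ rfl _; rfl
  rw [e (k + (s-k)) (by omega) (by omega)]
  congr 1
  ext Z
  simp only [Finset.mem_filter, Finset.mem_univ, true_and]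
  exact Iff.rfl

end Symp
end EKR

namespace EKR
section Eig
variable {F W : Type} [Field F] [AddCommGroup W] [Module F W]

/-- Linear combinations of a tuple. -/
def act {k s : ℕ} (u : Fin k → Fin s → F) (X : Fin s → W) : Fin k → W :=
  fun j => ∑ i, u j i • X i

theorem act_act {k s t : ℕ} (u : Fin k → Fin s → F) (v : Fin s → Fin t → F) (X : Fin t → W) :
    act u (act v X) = act ((Matrix.of u * Matrix.of v : Matrix _ _ F) : Fin k → Fin t → F) X := by
  funext j
  simp only [act, Finset.smul_sum, smul_smul, Matrix.mul_apply, Matrix.of_apply, Finset.sum_smul]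
  rw [Finset.sum_comm]

theorem act_one {s : ℕ} (X : Fin s → W) : act ((1 : Matrix (Fin s) (Fin s) F)) X = X := by
  funext j
  simp [act, Matrix.one_apply]

theorem exists_inv {s : ℕ} {g : Fin s → Fin s → F} (hg : LinearIndependent F g) :
    ∃ g' : Fin s → Fin s → F, LinearIndependent F g' ∧ (∀ X : Fin s → W, act g' (act g X) = X) ∧
      (∀ X : Fin s → W, act g (act g' X) = X) := by
  have hu : IsUnit (Matrix.of g) := Matrix.linearIndependent_rows_iff_isUnit.1 hg
  have hdet := (Matrix.isUnit_iff_isUnit_det _).1 hu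
  refine ⟨((Matrix.of g)⁻¹ : Matrix _ _ F), ?_, ?_, ?_⟩
  · exact Matrix.linearIndependent_rows_iff_isUnit.2 (Matrix.isUnit_nonsing_inv_iff.2 hu)
  · intro X
    refine (act_act _ _ X).trans ?_
    have := Matrix.nonsing_inv_mul _ hdet
    exact (congrArg (fun m : Matrix (Fin s) (Fin s) F => act m X) this).trans (act_one X)
  · intro X
    refine (act_act _ _ X).trans ?_
    have := Matrix.mul_nonsing_inv _ hdet
    exact (congrArg (fun m : Matrix (Fin s) (Fin s) F => act m X) this).trans (act_one X)

theorem act_bij {s : ℕ} {g : Fin s → Fin s → F} (hg : LinearIndependent F g) :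
    Function.Bijective (act g : (Fin s → W) → (Fin s → W)) := by
  obtain ⟨g', _, h1, h2⟩ := exists_inv (W := W) hg
  exact Function.bijective_iff_has_inverse.2 ⟨act g', h1, h2⟩

theorem act_fr {B : W →ₗ[F] W →ₗ[F] F} {s : ℕ} {g : Fin s → Fin s → F}
    (hg : LinearIndependent F g) {X : Fin s → W} (hX : Fr B X) : Fr B (act g X) := by
  constructor
  · exact hg.map' (Fintype.linearCombination F X)
      (by rw [LinearMap.ker_eq_bot]; exact hX.1.fintypeLinearCombination_injective)
  · intro i j
    simp [act, hX.2 _ _]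

theorem act_opp {B : W →ₗ[F] W →ₗ[F] F} {s t : ℕ} {g : Fin s → Fin s → F}
    (hg : LinearIndependent F g) {X : Fin s → W} {Y : Fin t → W} (h : Opp B X Y) :
    Opp B (act g X) Y := by
  have hu : IsUnit (Matrix.of g) := Matrix.linearIndependent_rows_iff_isUnit.1 hg
  have := LinearIndependent.map' h (Matrix.mulVecLin (Matrix.of g))
    (by rw [LinearMap.ker_eq_bot]; exact Matrix.mulVec_injective_of_isUnit hu)
  have e : cols B (act g X) Y = (Matrix.mulVecLin (Matrix.of g)) ∘ cols B X Y := by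
    funext j i
    simp [cols, act, Matrix.mulVec, dotProduct]
  unfold Opp
  rw [e]
  exact this

theorem opp_symm {B : W →ₗ[F] W →ₗ[F] F} (halt : ∀ v, B v v = 0) {s : ℕ} {X Y : Fin s → W}
    (h : Opp B X Y) : Opp B Y X := by
  have hsk : ∀ x y, B x y = - B y x := by
    intro x y
    have := halt (x + y)
    simp only [map_add, LinearMap.add_apply, halt, zero_add, add_zero] at this
    exact eq_neg_of_add_eq_zero_right this
  have hu : IsUnit (Matrix.of (cols B X Y)) := Matrix.linearIndependent_rows_iff_isUnit.1 h
  have h2 : IsUnit (-(Matrix.of (cols B X Y)).transpose) :=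
    (((Matrix.isUnit_transpose _).2 hu)).neg
  have := Matrix.linearIndependent_rows_iff_isUnit.2 h2
  have e : cols B Y X = (-(Matrix.of (cols B X Y)).transpose).row := by
    funext j i
    simp [cols, Matrix.row, ← hsk]
  unfold Opp
  rw [e]
  exact this

variable [Fintype F]

theorem exists_extend {p s : ℕ} (hp : p ≤ s) {u : Fin p → Fin s → F} (hu : LinearIndependent F u) :
    ∃ g : Fin s → Fin s → F, LinearIndependent F g ∧ ∀ j, g (Fin.castLE hp j) = u j := by
  obtain ⟨l, rfl⟩ := Nat.exists_eq_add_of_le hp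
  have h := ext_count (fun t (Y : Fin t → (Fin (p+l) → F)) => LinearIndependent F Y)
    (fun t => Fintype.card F ^ (p+l) - Fintype.card F ^ t)
    (fun t Z h => h.comp _ (Fin.castSucc_injective t)) (p+l) (by
      intro t ht Y hY
      have := card_not_mem_span hY ⊤ le_top
      have hcard : Fintype.card (⊤ : Submodule F (Fin (p+l) → F)) = Fintype.card F ^ (p+l) := by
        rw [Module.card_eq_pow_finrank (K := F), finrank_top]; simp
      rw [hcard] at this
      rw [← this]
      congr 1
      ext w
      simp [linearIndependent_finSnoc, hY]) l p le_rfl u hu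
  have hpos : 0 < ∏ j ∈ Finset.range l, (Fintype.card F ^ (p+l) - Fintype.card F ^ (p+j)) := by
    apply Finset.prod_pos
    intro j hj
    have := Finset.mem_range.1 hj
    exact Nat.sub_pos_of_lt (Nat.pow_lt_pow_right Fintype.one_lt_card (by omega))
  rw [← h, Finset.card_pos] at hpos
  obtain ⟨g, hg⟩ := hpos
  simp only [Finset.mem_filter, Finset.mem_univ, true_and] at hg
  exact ⟨g, hg.1, fun j => congrFun hg.2 j⟩

theorem card_li {k s : ℕ} (hk : k ≤ s) :
    (Finset.univ.filter fun u : Fin k → Fin s → F => LinearIndependent F u).card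
      = ∏ j ∈ Finset.range k, (Fintype.card F ^ s - Fintype.card F ^ j) := by
  have := card_linearIndependent (K := F) (V := Fin s → F) (k := k) (by simpa using hk)
  rw [Nat.card_eq_fintype_card, Fintype.card_subtype] at this
  rw [this, Finset.prod_range]
  simp

/-- The pairing of matrices as a functional. -/
def dotL {k s : ℕ} (M : Fin k → Fin s → F) : (Fin k → Fin s → F) →ₗ[F] F where
  toFun u := ∑ j, ∑ i, u j i * M j i
  map_add' u v := by simp [add_mul, Finset.sum_add_distrib]
  map_smul' c u := by simp [Finset.mul_sum, mul_assoc]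

theorem dotL_eq_zero {k s : ℕ} {M : Fin k → Fin s → F} (h : dotL M = 0) : M = 0 := by
  funext j i
  have := LinearMap.congr_fun h (Pi.single j (Pi.single i 1))
  simp only [dotL, LinearMap.coe_mk, AddHom.coe_mk, LinearMap.zero_apply] at this
  rw [Finset.sum_eq_single j, Finset.sum_eq_single i] at this
  · simpa using this
  · intro b _ hb; simp [hb]
  · simp
  · intro b _ hb; simp [hb]
  · simp

/-- The Fourier coefficient. -/
noncomputable def Sco (ψ : AddChar F ℂ) {k s : ℕ} (u : Fin k → Fin s → F) : ℂ :=
  ∑ M ∈ Finset.univ.filter (fun M : Fin k → Fin s → F => LinearIndependent F M), ψ (- dotL M u)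

theorem Sco_bound (ψ : AddChar F ℂ) (hψ : ψ ≠ 1) {k s : ℕ} {u : Fin k → Fin s → F}
    (hu : LinearIndependent F u) : ‖Sco ψ u‖ ≤ (Fintype.card F : ℝ) ^ (k.choose 2) := by
  let w : Fin k → ((Fin s → F) →ₗ[F] F) := fun j => ∑ i, (- u j i) • LinearMap.proj i
  have hw : LinearIndependent F w := by
    rw [Fintype.linearIndependent_iff]
    intro c hc
    refine Fintype.linearIndependent_iff.1 hu c ?_
    funext i
    have := LinearMap.congr_fun hc (Pi.single i 1)
    simp only [w, LinearMap.sum_apply, LinearMap.smul_apply, LinearMap.proj_apply, smul_eq_mul,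
      Pi.single_apply, mul_ite, mul_one, mul_zero, Finset.sum_ite_eq', Finset.mem_univ, if_true,
      LinearMap.zero_apply, mul_neg, Finset.sum_neg_distrib, neg_eq_zero] at this
    simpa using this
  have := char_sum_li ψ hψ k (Fin s → F) w hw
  refine le_of_eq_of_le ?_ this
  congr 1
  refine Finset.sum_congr rfl fun M _ => ?_
  congr 1
  simp [dotL, w]

theorem inversion (ψ : AddChar F ℂ) (hψ : ψ ≠ 1) {k s : ℕ} (M : Fin k → Fin s → F) :
    ∑ u, Sco ψ u * ψ (dotL M u) =
      (Fintype.card F : ℂ) ^ (s * k) * if LinearIndependent F M then 1 else 0 := by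
  simp only [Sco, Finset.sum_mul]
  rw [Finset.sum_comm]
  have e : ∀ M' : Fin k → Fin s → F, ∑ u, ψ (- dotL M' u) * ψ (dotL M u)
      = if M' = M then (Fintype.card F : ℂ) ^ (s * k) else 0 := by
    intro M'
    have h1 : ∀ u, ψ (- dotL M' u) * ψ (dotL M u) = ψ (dotL (M - M') u) := by
      intro u
      rw [← AddChar.map_add_eq_mul]
      congr 1
      simp [dotL, mul_sub, Finset.sum_sub_distrib]
      ring
    simp only [h1]
    rw [sum_char ψ hψ]
    have h2 : dotL (M - M') = 0 ↔ M' = M := by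
      constructor
      · intro h; exact (sub_eq_zero.1 (dotL_eq_zero h)).symm
      · rintro rfl; ext; simp [dotL]
    simp only [h2]
    congr 1
    simp [pow_mul]
  simp only [e]
  rw [Finset.sum_ite_eq']
  simp

end Eig
end EKR

namespace EKR
section Eig2
variable {F W : Type} [Field F] [AddCommGroup W] [Module F W] [Fintype F] [Fintype W]

/-- Sum of `f` over all extensions of a tuple. -/
noncomputable def Ires {p s : ℕ} (hp : p ≤ s) (f : (Fin s → W) → ℝ) (Z : Fin p → W) : ℝ :=
  ∑ X : Fin s → W, if (fun i => X (Fin.castLE hp i)) = Z then f X else 0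

theorem push_sum {p s : ℕ} (hp : p ≤ s) (f : (Fin s → W) → ℝ) (Θ : (Fin p → W) → ℂ) :
    ∑ X, (f X : ℂ) * Θ (fun i => X (Fin.castLE hp i)) = ∑ Z, (Ires hp f Z : ℂ) * Θ Z := by
  simp only [Ires, Complex.ofReal_sum, Finset.sum_mul]
  rw [Finset.sum_comm]
  refine Finset.sum_congr rfl fun X _ => ?_
  rw [Finset.sum_eq_single (fun i => X (Fin.castLE hp i))]
  · simp
  · intro Z _ hZ
    rw [if_neg hZ.symm]; simp
  · simp

theorem push_sum_act {p s : ℕ} (hp : p ≤ s) {f : (Fin s → W) → ℝ}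
    (hf : ∀ g : Fin s → Fin s → F, LinearIndependent F g → ∀ X, f (act g X) = f X)
    {v : Fin p → Fin s → F} (hv : LinearIndependent F v) (Θ : (Fin p → W) → ℂ) :
    ∑ X, (f X : ℂ) * Θ (act v X) = ∑ Z, (Ires hp f Z : ℂ) * Θ Z := by
  obtain ⟨g, hg, hgv⟩ := exists_extend hp hv
  have hb := (act_bij (W := W) hg).sum_comp
    (fun X => (f X : ℂ) * Θ (fun i => X (Fin.castLE hp i)))
  rw [← push_sum, ← hb]
  refine Finset.sum_congr rfl fun X _ => ?_
  rw [hf g hg]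
  congr 2
  funext j
  simp [act, hgv]

theorem T_li {B : W →ₗ[F] W →ₗ[F] F} (ψ : AddChar F ℂ) {k s : ℕ} (hk : k ≤ s)
    {f : (Fin s → W) → ℝ}
    (hf : ∀ g : Fin s → Fin s → F, LinearIndependent F g → ∀ X, f (act g X) = f X)
    {u : Fin k → Fin s → F} (hu : LinearIndependent F u) (Y : Fin k → W) :
    ∑ X, (f X : ℂ) * ψ (dotL (cols B X Y) u)
      = ∑ Z, (Ires hk f Z : ℂ) * ψ (∑ j, B (Z j) (Y j)) := by
  rw [← push_sum_act hk hf hu (fun Z => ψ (∑ j, B (Z j) (Y j)))]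
  refine Finset.sum_congr rfl fun X _ => ?_
  simp [dotL, cols, act]

theorem T_ld {B : W →ₗ[F] W →ₗ[F] F} (ψ : AddChar F ℂ) {k s : ℕ}
    {f : (Fin s → W) → ℝ}
    (hf : ∀ g : Fin s → Fin s → F, LinearIndependent F g → ∀ X, f (act g X) = f X)
    (hz : ∀ p (hp : p ≤ s), p < k → ∀ Z, Ires hp f Z = 0)
    {u : Fin k → Fin s → F} (hu : ¬ LinearIndependent F u) (Y : Fin k → W) :
    ∑ X, (f X : ℂ) * ψ (dotL (cols B X Y) u) = 0 := by
  set U := Submodule.span F (Set.range u) with hU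
  have hlt : finrank F U < k := by
    have h1 : finrank F U ≤ k := by
      have := finrank_range_le_card (R := F) u
      rw [Fintype.card_fin] at this
      exact this
    refine lt_of_le_of_ne h1 fun h => hu ?_
    rw [linearIndependent_iff_card_eq_finrank_span]
    rw [Fintype.card_fin]
    exact h.symm
  have hle : finrank F U ≤ s := by simpa using Submodule.finrank_le U
  let b := Module.finBasis F U
  let v : Fin (finrank F U) → Fin s → F := fun i => (b i : Fin s → F)
  have hv : LinearIndependent F v :=
    b.linearIndependent.map' U.subtype (Submodule.ker_subtype _)
  have hmem : ∀ j, u j ∈ U := fun j => Submodule.subset_span ⟨j, rfl⟩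
  have hC : ∀ j, u j = ∑ p, b.repr ⟨u j, hmem j⟩ p • v p := by
    intro j
    have := congrArg (U.subtype) (b.sum_repr ⟨u j, hmem j⟩)
    simp only [map_sum, map_smul, Submodule.subtype_apply] at this
    exact this.symm
  have hact : ∀ X : Fin s → W, ∀ j, act u X j = ∑ p, b.repr ⟨u j, hmem j⟩ p • act v X p := by
    intro X j
    simp only [act]
    conv_lhs => rw [hC j]
    simp only [Finset.sum_apply, Pi.smul_apply, Finset.sum_smul, Finset.smul_sum, smul_smul,
      smul_eq_mul]
    rw [Finset.sum_comm]
  have key := push_sum_act hle hf hv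
    (fun Z => ψ (∑ j, B (∑ p, b.repr ⟨u j, hmem j⟩ p • Z p) (Y j)))
  have e0 : ∑ Z, (Ires hle f Z : ℂ) * ψ (∑ j, B (∑ p, b.repr ⟨u j, hmem j⟩ p • Z p) (Y j)) = 0 :=
    Finset.sum_eq_zero fun Z _ => by rw [hz _ hle hlt]; simp
  rw [← e0, ← key]
  refine Finset.sum_congr rfl fun X _ => ?_
  congr 2
  simp only [← hact]
  simp [dotL, cols, act]

/-- The pairing on tuples. -/
def bsum (B : W →ₗ[F] W →ₗ[F] F) (k : ℕ) : (Fin k → W) →ₗ[F] (Fin k → W) →ₗ[F] F :=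
  LinearMap.mk₂ F (fun X Y => ∑ j, B (X j) (Y j))
    (by intro a b c; simp [Finset.sum_add_distrib])
    (by intro c a b; simp [Finset.mul_sum])
    (by intro a b c; simp [Finset.sum_add_distrib])
    (by intro c a b; simp [Finset.mul_sum])

theorem bsum_nd {B : W →ₗ[F] W →ₗ[F] F} (hnd : ∀ v, (∀ w, B v w = 0) → v = 0) {k : ℕ}
    (X : Fin k → W) (h : bsum B k X = 0) : X = 0 := by
  funext j
  apply hnd
  intro w
  have := LinearMap.congr_fun h (Pi.single j w)
  simp only [bsum, LinearMap.mk₂_apply, LinearMap.zero_apply] at this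
  rw [Finset.sum_eq_single j] at this
  · simpa using this
  · intro b _ hb; simp [hb]
  · simp

theorem arith_exp {m s k : ℕ} (hs : s ≤ m) (hk : k ≤ s) (hk1 : 1 ≤ k) :
    (k.choose 2 + m * k) + m ≤ s * k + ∑ j ∈ Finset.range k, (2 * m - (s + j)) := by
  have h1 : s * k + ∑ j ∈ Finset.range k, (2 * m - (s + j)) + k.choose 2 = 2 * m * k := by
    have : k.choose 2 = ∑ j ∈ Finset.range k, j := by
      rw [Finset.sum_range_id, Nat.choose_two_right]
    rw [this]
    have h2 : s * k = ∑ j ∈ Finset.range k, s := by simp [mul_comm]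
    have h3 : 2 * m * k = ∑ j ∈ Finset.range k, 2 * m := by simp [mul_comm]
    rw [h2, h3, ← Finset.sum_add_distrib, ← Finset.sum_add_distrib]
    refine Finset.sum_congr rfl fun j hj => ?_
    have := Finset.mem_range.1 hj
    omega
  have h4 : 2 * k.choose 2 + k = k * k := by
    rw [Nat.choose_two_right, Nat.mul_div_cancel' (Nat.even_mul_pred_self k).two_dvd]
    obtain ⟨k, rfl⟩ := Nat.exists_eq_add_of_le' hk1
    simp; ring
  have h5 : k * k + m ≤ m * k + k := by
    obtain ⟨c, rfl⟩ := Nat.exists_eq_add_of_le (hk.trans hs)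
    obtain ⟨k, rfl⟩ := Nat.exists_eq_add_of_le' hk1
    nlinarith [Nat.zero_le (c * k)]
  nlinarith

/-- The main eigenvalue bound. -/
theorem eig_bound {B : W →ₗ[F] W →ₗ[F] F} (halt : ∀ v, B v v = 0)
    (hnd : ∀ v, (∀ w, B v w = 0) → v = 0) {m s : ℕ} (hm : finrank F W = 2 * m) (hs : s ≤ m)
    {f : (Fin s → W) → ℝ} (hf0 : f ≠ 0) (hsupp : ∀ X, ¬ Fr B X → f X = 0)
    (hsum : ∑ X, f X = 0) (lam : ℝ)
    (heig : ∀ X, Fr B X → ∑ Y ∈ Finset.univ.filter (fun Y => Fr B Y ∧ Opp B X Y), f Y = lam * f X) :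
    |lam| * (Fintype.card F : ℝ) ^ m ≤ ((∏ j ∈ Finset.range s,
      ((Fintype.card F ^ s - Fintype.card F ^ j) * Fintype.card F ^ (2 * m - (s + j))) : ℕ) : ℝ) := by
  by_cases hlam : lam = 0
  · rw [hlam, abs_zero, zero_mul]; exact Nat.cast_nonneg _
  have hinv : ∀ g : Fin s → Fin s → F, LinearIndependent F g → ∀ X, f (act g X) = f X := by
    intro g hg X
    obtain ⟨g', hg', h1, h2⟩ := exists_inv (W := W) hg
    by_cases hX : Fr B X
    · have e1 := heig _ (act_fr hg hX)
      have e2 := heig _ hX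
      have : ∀ Y : Fin s → W, Opp B (act g X) Y ↔ Opp B X Y := fun Y =>
        ⟨fun h => by have := act_opp hg' h; rwa [h1] at this, fun h => act_opp hg h⟩
      simp only [this] at e1
      rw [e2] at e1
      exact (mul_left_cancel₀ hlam e1).symm
    · rw [hsupp X hX, hsupp]
      intro h
      apply hX
      have := act_fr hg' h
      rwa [h1] at this
  have hex : ∃ k, ∃ hk : k ≤ s, ∃ Z, Ires hk f Z ≠ 0 := by
    obtain ⟨X, hX⟩ := Function.ne_iff.1 hf0
    refine ⟨s, le_rfl, X, ?_⟩
    have : Ires (le_refl s) f X = f X := by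
      unfold Ires
      rw [Finset.sum_eq_single X]
      · simp
      · intro Y _ hY
        rw [if_neg]
        simpa using hY
      · simp
    rw [this]; exact hX
  obtain ⟨hk, Z0, hZ0⟩ := Nat.find_spec hex
  have hmin := fun p (hp : p < Nat.find hex) => Nat.find_min hex hp
  generalize Nat.find hex = k at hk Z0 hZ0 hmin
  have hz : ∀ p (hp : p ≤ s), p < k → ∀ Z, Ires hp f Z = 0 := by
    intro p hp hpk Z
    by_contra hc
    exact hmin p hpk ⟨hp, Z, hc⟩
  have hk1 : 1 ≤ k := by
    by_contra hc
    obtain rfl : k = 0 := by omega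
    apply hZ0
    unfold Ires
    rw [← hsum]
    refine Finset.sum_congr rfl fun X _ => if_pos (funext fun i => i.elim0)
  set q := Fintype.card F with hq
  set h := Ires hk f with hh
  have hsupph : ∀ Y, ¬ Fr B Y → h Y = 0 := by
    intro Y hY
    refine Finset.sum_eq_zero fun X _ => ?_
    split_ifs with hXY
    · apply hsupp
      intro hX
      apply hY
      rw [← hXY]
      exact ⟨hX.1.comp _ (Fin.castLE_injective hk), fun i j => hX.2 _ _⟩
    · rfl
  set ck : ℕ := ∏ j ∈ Finset.Ico k s, ((q ^ s - q ^ j) * q ^ (2 * m - (s + j))) with hck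
  set Nk : ℕ := ∏ j ∈ Finset.range k, (q ^ s - q ^ j) with hNk
  -- intertwining
  have inter : ∀ Y, Fr B Y → lam * h Y = ck * ∑ X, f X * (if Opp B X Y then 1 else 0) := by
    intro Y hY
    have e1 : lam * h Y = ∑ Z : Fin s → W, ∑ X : Fin s → W,
        if ((Fr B Z ∧ Opp B X Z) ∧ (fun i => Z (Fin.castLE hk i)) = Y) then f X else 0 := by
      rw [hh, Ires, Finset.mul_sum]
      refine Finset.sum_congr rfl fun Z _ => ?_
      by_cases hZY : (fun i => Z (Fin.castLE hk i)) = Y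
      · simp only [hZY, if_true, and_true]
        by_cases hZ : Fr B Z
        · rw [← heig Z hZ, Finset.sum_filter]
          refine Finset.sum_congr rfl fun X _ => ?_
          by_cases hX : Fr B X
          · have : Opp B Z X ↔ Opp B X Z := ⟨opp_symm halt, opp_symm halt⟩
            simp [hX, hZ, this]
          · simp [hX, hsupp X hX]
        · simp [hZ, hsupp Z hZ]
      · simp [hZY]
    rw [e1, Finset.sum_comm, Finset.mul_sum]
    refine Finset.sum_congr rfl fun X _ => ?_
    rw [← Finset.sum_filter, Finset.sum_const, nsmul_eq_mul]
    by_cases hX : Fr B X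
    · by_cases hO : Opp B X Y
      · rw [card_opp_ext halt hnd hk hX hY hO, hm, if_pos hO]
        ring
      · rw [if_neg hO, Finset.card_eq_zero.2]
        · simp
        · rw [Finset.filter_eq_empty_iff]
          rintro Z - ⟨⟨_, h2⟩, h3⟩
          apply hO
          rw [← h3]
          exact LinearIndependent.comp h2 _ (Fin.castLE_injective hk)
    · simp [hsupp X hX]
  obtain ⟨ψ, hψ⟩ := exists_char (F := F)
  have hq0 : (0 : ℝ) < q := by exact_mod_cast Fintype.card_pos
  -- Fourier expansion
  have four : ∀ Y, Fr B Y → |lam * h Y| * (q : ℝ) ^ (s * k) ≤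
      (ck * Nk * (q : ℝ) ^ (k.choose 2)) * ‖∑ Z, (h Z : ℂ) * ψ (bsum B k Z Y)‖ := by
    intro Y hY
    have e1 : ((∑ X, f X * (if Opp B X Y then 1 else 0) : ℝ) : ℂ) * (q : ℂ) ^ (s * k)
        = (∑ u ∈ Finset.univ.filter (fun u : Fin k → Fin s → F => LinearIndependent F u), Sco ψ u) *
          ∑ Z, (h Z : ℂ) * ψ (bsum B k Z Y) := by
      have e2 : ((∑ X, f X * (if Opp B X Y then 1 else 0) : ℝ) : ℂ) * (q : ℂ) ^ (s * k)
          = ∑ u, Sco ψ u * ∑ X, (f X : ℂ) * ψ (dotL (cols B X Y) u) := by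
        simp only [Finset.mul_sum]
        rw [Finset.sum_comm]
        push_cast
        rw [Finset.sum_mul]
        refine Finset.sum_congr rfl fun X _ => ?_
        have := inversion ψ hψ (cols B X Y)
        calc _ = (f X : ℂ) * ((q : ℂ) ^ (s * k) * if LinearIndependent F (cols B X Y) then 1 else 0) := by
              have : Opp B X Y ↔ LinearIndependent F (cols B X Y) := Iff.rfl
              simp only [this]
              split_ifs <;> simp
          _ = _ := by
              rw [hq, ← this, Finset.mul_sum]
              refine Finset.sum_congr rfl fun u _ => ?_
              ring
      rw [e2, Finset.sum_mul, Finset.sum_filter]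
      refine Finset.sum_congr rfl fun u _ => ?_
      split_ifs with hu
      · rw [T_li ψ hk hinv hu]; rfl
      · rw [T_ld ψ hinv hz hu, mul_zero]
    have e3 : |∑ X, f X * (if Opp B X Y then 1 else 0)| * (q : ℝ) ^ (s * k) ≤
        (Nk * (q : ℝ) ^ (k.choose 2)) * ‖∑ Z, (h Z : ℂ) * ψ (bsum B k Z Y)‖ := by
      have e4 := congrArg norm e1
      rw [norm_mul, norm_mul, Complex.norm_real, norm_pow, Complex.norm_natCast, Real.norm_eq_abs] at e4
      rw [e4]
      refine mul_le_mul_of_nonneg_right ?_ (norm_nonneg _)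
      refine (norm_sum_le _ _).trans ?_
      refine (Finset.sum_le_card_nsmul _ _ ((q : ℝ) ^ (k.choose 2)) ?_).trans ?_
      · intro u hu
        exact Sco_bound ψ hψ (Finset.mem_filter.1 hu).2
      · rw [card_li hk, nsmul_eq_mul]
    rw [inter Y hY, abs_mul, Nat.abs_cast]
    calc _ = (ck : ℝ) * (|∑ X, f X * (if Opp B X Y then 1 else 0)| * (q : ℝ) ^ (s * k)) := by ring
      _ ≤ ck * ((Nk * (q : ℝ) ^ (k.choose 2)) * ‖∑ Z, (h Z : ℂ) * ψ (bsum B k Z Y)‖) :=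
        mul_le_mul_of_nonneg_left e3 (Nat.cast_nonneg _)
      _ = _ := by ring
  -- square and sum
  have hpos : 0 < ∑ Y, h Y ^ 2 :=
    Finset.sum_pos' (fun _ _ => sq_nonneg _) ⟨Z0, Finset.mem_univ _, by positivity⟩
  have hcardE : (Fintype.card (Fin k → W) : ℝ) = ((q : ℝ) ^ (m * k)) ^ 2 := by
    rw [Fintype.card_fun, Module.card_eq_pow_finrank (K := F) (V := W), hm, Fintype.card_fin]
    push_cast
    rw [← hq, ← pow_mul, ← pow_mul]; congr 1; ring
  have hsq : (|lam| * (q : ℝ) ^ (s * k)) ^ 2 ≤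
      ((ck * Nk * (q : ℝ) ^ (k.choose 2)) * (q : ℝ) ^ (m * k)) ^ 2 := by
    have hpl := plancherel ψ hψ (bsum B k) (bsum_nd hnd) h
    have : (|lam| * (q : ℝ) ^ (s * k)) ^ 2 * ∑ Y, h Y ^ 2 ≤
        ((ck * Nk * (q : ℝ) ^ (k.choose 2)) * (q : ℝ) ^ (m * k)) ^ 2 * ∑ Y, h Y ^ 2 := by
      calc _ = ∑ Y, (|lam * h Y| * (q : ℝ) ^ (s * k)) ^ 2 := by
            rw [Finset.mul_sum]
            refine Finset.sum_congr rfl fun Y _ => ?_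
            rw [abs_mul, mul_pow, mul_pow, mul_pow, sq_abs (h Y)]; ring
        _ ≤ ∑ Y, ((ck * Nk * (q : ℝ) ^ (k.choose 2)) * ‖∑ Z, (h Z : ℂ) * ψ (bsum B k Z Y)‖) ^ 2 := by
            refine Finset.sum_le_sum fun Y _ => ?_
            by_cases hY : Fr B Y
            · exact pow_le_pow_left₀ (by positivity) (four Y hY) 2
            · rw [hsupph Y hY]
              simp only [mul_zero, abs_zero, zero_mul, ne_eq, OfNat.ofNat_ne_zero,
                not_false_eq_true, zero_pow]
              positivity
        _ = (ck * Nk * (q : ℝ) ^ (k.choose 2)) ^ 2 * ∑ Y, ‖∑ Z, (h Z : ℂ) * ψ (bsum B k Z Y)‖ ^ 2 := by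
            rw [Finset.mul_sum]
            refine Finset.sum_congr rfl fun Y _ => ?_
            rw [mul_pow]
        _ = _ := by
            rw [hpl, hcardE]; ring
    exact le_of_mul_le_mul_right this hpos
  have hle := (sq_le_sq₀ (by positivity) (by positivity)).1 hsq
  -- numerics
  set E := ∑ j ∈ Finset.range k, (2 * m - (s + j)) with hE
  have hd : (∏ j ∈ Finset.range s, ((q ^ s - q ^ j) * q ^ (2 * m - (s + j)))) = ck * Nk * q ^ E := by
    rw [← Finset.prod_range_mul_prod_Ico _ hk, Finset.prod_mul_distrib, ← hNk, ← hck,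
      Finset.prod_pow_eq_pow_sum]
    ring
  rw [hd]
  push_cast
  have hexp := arith_exp hs hk hk1
  have hq1 : (1 : ℝ) ≤ q := by exact_mod_cast Fintype.card_pos
  have h1 : (q : ℝ) ^ (k.choose 2 + m * k) * (|lam| * (q : ℝ) ^ m) ≤
      (q : ℝ) ^ (k.choose 2 + m * k) * (ck * Nk * (q : ℝ) ^ E) := by
    calc (q : ℝ) ^ (k.choose 2 + m * k) * (|lam| * (q : ℝ) ^ m)
        = |lam| * (q : ℝ) ^ (k.choose 2 + m * k + m) := by rw [pow_add _ _ m]; ring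
      _ ≤ |lam| * (q : ℝ) ^ (s * k + E) :=
          mul_le_mul_of_nonneg_left (pow_le_pow_right₀ hq1 hexp) (abs_nonneg _)
      _ = (|lam| * (q : ℝ) ^ (s * k)) * (q : ℝ) ^ E := by rw [pow_add]; ring
      _ ≤ ((ck * Nk * (q : ℝ) ^ (k.choose 2)) * (q : ℝ) ^ (m * k)) * (q : ℝ) ^ E :=
          mul_le_mul_of_nonneg_right hle (by positivity)
      _ = _ := by rw [pow_add]; ring
  exact le_of_mul_le_mul_left h1 (by positivity)

end Eig2
end EKR

namespace EKR

/-- Abstract ratio bound. -/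
theorem hoffman {Ω : Type} [Fintype Ω] (A : Matrix Ω Ω ℝ) (hsym : ∀ x y, A x y = A y x)
    (d Q : ℝ) (hd : 0 < d) (hQ : 0 < Q) (hrow : ∀ x, ∑ y, A x y = d)
    (heig : ∀ f : Ω → ℝ, f ≠ 0 → ∑ x, f x = 0 → ∀ lam : ℝ,
      (∀ x, ∑ y, A x y * f y = lam * f x) → |lam| * Q ≤ d)
    (G : Finset Ω) (hG : ∀ x ∈ G, ∀ y ∈ G, A x y = 0) :
    (G.card : ℝ) * (Q + 1) ≤ Fintype.card Ω := by
  rcases G.eq_empty_or_nonempty with rfl | ⟨x0, hx0⟩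
  · simp
  have hE : (0:ℝ) < Fintype.card Ω := by
    exact_mod_cast Fintype.card_pos_iff.mpr ⟨x0⟩
  set E : ℝ := ((Fintype.card Ω : ℕ) : ℝ) with hEdef
  set c : ℝ := d * (1 + 1 / Q) / E with hc
  let M : Matrix Ω Ω ℝ := Matrix.of fun x y => A x y + (if x = y then d / Q else 0) - c
  have hM : ∀ x y, M x y = A x y + (if x = y then d / Q else 0) - c := fun x y => rfl
  have hMH : M.IsHermitian := by
    ext x y
    simp only [Matrix.conjTranspose_apply, hM, star_trivial]
    rw [hsym y x]
    simp only [eq_comm]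
  have hMv : ∀ (f : Ω → ℝ) x, (M.mulVec f) x = ∑ y, A x y * f y + d / Q * f x - c * ∑ y, f y := by
    intro f x
    simp only [Matrix.mulVec, dotProduct, hM, sub_mul, add_mul, Finset.sum_sub_distrib,
      Finset.sum_add_distrib, ite_mul, zero_mul, Finset.sum_ite_eq, Finset.mem_univ, if_true,
      Finset.mul_sum]
  have hPSD : M.PosSemidef := by
    rw [hMH.posSemidef_iff_eigenvalues_nonneg]
    intro i
    have h1 := hMH.mulVec_eigenvectorBasis i
    set mu := hMH.eigenvalues i with hmu
    set f : Ω → ℝ := ⇑(hMH.eigenvectorBasis i) with hf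
    have hf0 : f ≠ 0 := by
      intro h0
      have hn := hMH.eigenvectorBasis.orthonormal.1 i
      have : hMH.eigenvectorBasis i = 0 := by
        ext x
        exact congrFun h0 x
      rw [this] at hn
      simp at hn
    have h2 : ∀ x, ∑ y, A x y * f y + d / Q * f x - c * ∑ y, f y = mu * f x := by
      intro x
      rw [← hMv, h1]; rfl
    by_cases hs : ∑ x, f x = 0
    · have h3 := heig f hf0 hs (mu - d / Q) (fun x => by
        have := h2 x
        rw [hs] at this
        linarith)
      have h4 : |mu - d / Q| ≤ d / Q := by
        rw [le_div_iff₀ hQ]; exact h3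
      have := (abs_le.mp h4).1
      show 0 ≤ mu
      linarith
    · have h5 : ∑ x, (∑ y, A x y * f y + d / Q * f x - c * ∑ y, f y) = mu * ∑ x, f x := by
        rw [Finset.sum_congr rfl fun x _ => h2 x, Finset.mul_sum]
      rw [Finset.sum_sub_distrib, Finset.sum_add_distrib, Finset.sum_comm, ← Finset.mul_sum,
        Finset.sum_const, Finset.card_univ, nsmul_eq_mul] at h5
      have h6 : ∑ y, ∑ x, A x y * f y = d * ∑ y, f y := by
        rw [Finset.mul_sum]
        refine Finset.sum_congr rfl fun y _ => ?_
        rw [← Finset.sum_mul]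
        congr 1
        rw [← hrow y]
        exact Finset.sum_congr rfl fun x _ => hsym x y
      rw [h6] at h5
      have h7 : E * c = d * (1 + 1 / Q) := by
        rw [hc]; field_simp
      have h8 : mu * ∑ x, f x = 0 := by
        rw [← h5, ← mul_assoc, ← hEdef, h7]; ring
      rcases mul_eq_zero.mp h8 with h | h
      · exact h.ge
      · exact absurd h hs
  have h9 := hPSD.dotProduct_mulVec_nonneg (fun x => if x ∈ G then (1:ℝ) else 0)
  simp only [dotProduct, hMv] at h9
  have h10 : ∀ x ∈ G, ∑ y, A x y * (if y ∈ G then (1:ℝ) else 0) = 0 := by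
    intro x hx
    refine Finset.sum_eq_zero fun y _ => ?_
    split_ifs with hy
    · rw [hG x hx y hy, zero_mul]
    · simp
  have h11 : ∑ y : Ω, (if y ∈ G then (1:ℝ) else 0) = G.card := by simp
  rw [h11] at h9
  have h12 : ∑ x, star (fun x => if x ∈ G then (1:ℝ) else 0) x *
      (∑ y, A x y * (if y ∈ G then (1:ℝ) else 0) + d / Q * (if x ∈ G then (1:ℝ) else 0)
        - c * G.card) = ∑ x, (if x ∈ G then (1:ℝ) else 0) * (d / Q - c * G.card) := by
    refine Finset.sum_congr rfl fun x _ => ?_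
    simp only [Pi.star_apply, star_trivial]
    by_cases hx : x ∈ G
    · rw [h10 x hx]; simp [hx]
    · simp [hx]
  rw [h12, ← Finset.sum_mul, h11] at h9
  have hg : (0:ℝ) < G.card := by exact_mod_cast Finset.card_pos.mpr ⟨x0, hx0⟩
  have h13 : 0 ≤ d / Q - c * G.card := nonneg_of_mul_nonneg_right h9 hg
  have h14 : d / Q - c * G.card = d / (Q * E) * (E - G.card * (Q + 1)) := by
    rw [hc]; field_simp
  rw [h14] at h13
  have := nonneg_of_mul_nonneg_right h13 (by positivity)
  linarith

variable {F W : Type} [Field F] [AddCommGroup W] [Module F W] [Fintype F] [Fintype W]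

theorem frames_bound {B : W →ₗ[F] W →ₗ[F] F} (halt : ∀ v, B v v = 0)
    (hnd : ∀ v, (∀ w, B v w = 0) → v = 0) {m s : ℕ} (hm : finrank F W = 2 * m) (hs : s ≤ m)
    (G : Finset (Fin s → W)) (hGF : ∀ X ∈ G, Fr B X) (hG : ∀ X ∈ G, ∀ Y ∈ G, ¬ Opp B X Y) :
    (G.card : ℝ) * ((Fintype.card F : ℝ) ^ m + 1) ≤ ((∏ j ∈ Finset.range s,
      (Fintype.card F ^ (2 * m - j) - Fintype.card F ^ j) : ℕ) : ℝ) := by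
  have hq : 1 < Fintype.card F := Fintype.one_lt_card
  have hd0 : 0 < ∏ j ∈ Finset.range s,
      ((Fintype.card F ^ s - Fintype.card F ^ j) * Fintype.card F ^ (2 * m - (s + j))) := by
    refine Finset.prod_pos fun j hj => Nat.mul_pos ?_ (by positivity)
    exact Nat.sub_pos_of_lt (Nat.pow_lt_pow_right hq (Finset.mem_range.mp hj))
  have hrow : ∀ X : Fin s → W, Fr B X →
      (Finset.univ.filter fun Z : Fin s → W => Fr B Z ∧ Opp B X Z).card = ∏ j ∈ Finset.range s,
      ((Fintype.card F ^ s - Fintype.card F ^ j) * Fintype.card F ^ (2 * m - (s + j))) := by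
    intro X hX
    have h := card_opp_ext halt hnd (Nat.zero_le s) hX (Y := Fin.elim0)
      ⟨linearIndependent_empty_type, fun i => i.elim0⟩ linearIndependent_empty_type
    rw [hm, ← Finset.range_eq_Ico] at h
    rw [← h]
    congr 1
    ext Z
    simp only [Finset.mem_filter, Finset.mem_univ, true_and]
    exact ⟨fun h => ⟨h, funext fun i => i.elim0⟩, fun h => h.1⟩
  let A : Matrix {X : Fin s → W // Fr B X} {X : Fin s → W // Fr B X} ℝ :=
    Matrix.of fun x y => if Opp B x.1 y.1 then 1 else 0
  have hA : ∀ x y, A x y = if Opp B x.1 y.1 then 1 else 0 := fun x y => rfl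
  have hsub : ∀ (φ : (Fin s → W) → ℝ), ∑ y : {X : Fin s → W // Fr B X}, φ y.1 =
      ∑ Y ∈ Finset.univ.filter (fun Y => Fr B Y), φ Y := by
    intro φ
    exact (Finset.sum_subtype _ (by simp) φ).symm
  have key := hoffman A (fun x y => by
      have : Opp B x.1 y.1 ↔ Opp B y.1 x.1 := ⟨opp_symm halt, opp_symm halt⟩
      simp only [hA, this])
    (((∏ j ∈ Finset.range s,
      ((Fintype.card F ^ s - Fintype.card F ^ j) * Fintype.card F ^ (2 * m - (s + j)))) : ℕ) : ℝ)
    ((Fintype.card F : ℝ) ^ m) (by exact_mod_cast hd0) (by positivity)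
    (fun x => by
      simp only [hA]
      rw [hsub (fun Y => if Opp B x.1 Y then 1 else 0), ← hrow x.1 x.2, Finset.sum_boole,
        Finset.filter_filter])
    (fun f hf0 hsum lam hf => by
      let g : (Fin s → W) → ℝ := fun X => if h : Fr B X then f ⟨X, h⟩ else 0
      have hgf : ∀ x : {X : Fin s → W // Fr B X}, g x.1 = f x := fun x => by
        simp only [g, dif_pos x.2, Subtype.coe_eta]
      refine eig_bound halt hnd hm hs (f := g) ?_ ?_ ?_ lam ?_
      · intro h0
        apply hf0
        funext x
        rw [← hgf, h0]; rfl
      · intro X hX; simp only [g, dif_neg hX]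
      · rw [← hsum, ← Finset.sum_congr rfl (fun x _ => hgf x), hsub g]
        symm
        apply Finset.sum_subset (Finset.subset_univ _)
        intro X _ hX
        simp only [Finset.mem_filter, Finset.mem_univ, true_and] at hX
        simp only [g, dif_neg hX]
      · intro X hX
        have := hf ⟨X, hX⟩
        simp only [hA, ← hgf] at this
        rw [← this, hsub (fun Y => (if Opp B X Y then (1:ℝ) else 0) * g Y), ← Finset.filter_filter,
          Finset.sum_filter]
        simp only [ite_mul, one_mul, zero_mul])
    (G.subtype (fun X => Fr B X))
    (fun x hx y hy => by
      simp only [Finset.mem_subtype] at hx hy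
      simp only [hA, if_neg (hG _ hx _ hy)])
  rw [Finset.card_subtype, Finset.filter_true_of_mem hGF, Fintype.card_subtype, card_fr halt hnd,
    hm] at key
  exact key

end EKR

namespace EKR

variable {F V : Type} [Field F] [AddCommGroup V] [Module F V] [Fintype F] [Fintype V]

/-- Number of frames of an `s`-space. -/
theorem card_frames_ge (S : Submodule F V) {s : ℕ} (hS : finrank F S = s) :
    ∏ i ∈ Finset.range s, (Fintype.card F ^ s - Fintype.card F ^ i) ≤
      (Finset.univ.filter fun X : Fin s → V => LinearIndependent F X ∧
        Submodule.span F (Set.range X) = S).card := by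
  have h := card_linearIndependent (K := F) (V := S) (k := s) hS.ge
  rw [hS, Nat.card_eq_fintype_card, Fintype.card_subtype,
    Finset.prod_range (fun i => Fintype.card F ^ s - Fintype.card F ^ i) |>.symm] at h
  rw [← h]
  refine Finset.card_le_card_of_injOn (fun Y i => (Y i : V)) ?_ ?_
  · intro Y hY
    have hY' : LinearIndependent F Y := by simpa using hY
    have hli : LinearIndependent F (fun i => (Y i : V)) :=
      hY'.map' S.subtype (Submodule.ker_subtype S)
    simp only [Finset.coe_filter, Finset.mem_univ, true_and, Set.mem_ofPred_eq]
    refine ⟨hli, ?_⟩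
    apply Submodule.eq_of_le_of_finrank_eq
    · rw [Submodule.span_le]
      rintro _ ⟨i, rfl⟩
      exact (Y i).2
    · rw [finrank_span_eq_card hli, Fintype.card_fin, hS]
  · intro Y _ Y' _ hYY
    funext i
    exact Subtype.ext (congrFun hYY i)

theorem reduction {n s : ℕ} {B : V →ₗ[F] V →ₗ[F] F} (halt : ∀ v, B v v = 0)
    (hnd : ∀ v, (∀ w, B v w = 0) → v = 0) (hdim : finrank F V = 2 * n) (hsn : s ≤ n - 1)
    (p : V) (hp : p ≠ 0) (𝓕 : Finset (Submodule F V))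
    (h𝓕 : ∀ S ∈ 𝓕, IsTotIso B S ∧ finrank F S = s ∧ (∀ v ∈ S, B p v = 0) ∧ p ∉ S)
    (hno : ∀ S ∈ 𝓕, ∀ T ∈ 𝓕, ¬ SpaceOpp B S T) :
    (𝓕.card : ℝ) * ((∏ i ∈ Finset.range s, (Fintype.card F ^ s - Fintype.card F ^ i) : ℕ) : ℝ) *
      ((Fintype.card F : ℝ) ^ (n - 1) + 1) ≤ (Fintype.card F : ℝ) ^ s *
      ((∏ j ∈ Finset.range s,
      (Fintype.card F ^ (2 * (n - 1) - j) - Fintype.card F ^ j) : ℕ) : ℝ) := by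
  have hfd : FiniteDimensional F V := Module.Finite.of_finite
  have hsk : ∀ x y, B x y = - B y x := by
    intro x y
    have h := halt (x + y)
    simp only [map_add, LinearMap.add_apply, halt, zero_add, add_zero] at h
    exact eq_neg_of_add_eq_zero_right h
  obtain ⟨y, hy⟩ : ∃ y, B p y ≠ 0 := by
    by_contra hcon
    push Not at hcon
    exact hp (hnd p hcon)
  have hy' : B y p ≠ 0 := by rw [hsk]; exact neg_ne_zero.mpr hy
  have hli2 : LinearIndependent F ![p, y] := by
    rw [LinearIndependent.pair_iff]
    intro a b hab
    have h1 := congrArg (B p) hab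
    have h2 := congrArg (B y) hab
    simp only [map_add, map_smul, halt, smul_eq_mul, mul_zero, zero_add, add_zero, map_zero,
      mul_eq_zero, hy, hy', or_false] at h1 h2
    exact ⟨h2, h1⟩
  let W : Submodule F V := LinearMap.ker (LinearMap.pi (fun i => B (![p, y] i)) : V →ₗ[F] (Fin 2 → F))
  have hW : ∀ v, v ∈ W ↔ B p v = 0 ∧ B y v = 0 := by
    intro v
    simp only [W, LinearMap.mem_ker]
    rw [funext_iff, Fin.forall_fin_two]
    simp
  have hWdim : finrank F W = 2 * (n - 1) := by
    have h := LinearMap.finrank_range_add_finrank_ker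
      (LinearMap.pi (fun i => B (![p, y] i)) : V →ₗ[F] (Fin 2 → F))
    rw [LinearMap.range_eq_top.mpr (pi_surj hnd hli2), finrank_top, hdim] at h
    simp only [finrank_fin_fun] at h
    change 2 + finrank F W = 2 * n at h
    omega
  let ρ : V →ₗ[F] V := LinearMap.id - (B p).smulRight ((B p y)⁻¹ • y)
    - (B y).smulRight ((B y p)⁻¹ • p)
  have hρ : ∀ v, ρ v = v - (B p v * (B p y)⁻¹) • y - (B y v * (B y p)⁻¹) • p := by
    intro v
    simp [ρ, smul_smul]
  have hρW : ∀ v, ρ v ∈ W := by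
    intro v
    rw [hW, hρ]
    simp only [map_sub, map_smul, halt, smul_eq_mul, mul_zero, sub_zero]
    constructor <;> field_simp <;> simp
  let π : V →ₗ[F] W := ρ.codRestrict W hρW
  have hπ : ∀ v, ((π v : W) : V) = v - (B p v * (B p y)⁻¹) • y - (B y v * (B y p)⁻¹) • p := hρ
  let BW : W →ₗ[F] W →ₗ[F] F := B.compl₁₂ W.subtype W.subtype
  have hBW : ∀ u v : W, BW u v = B u v := fun u v => rfl
  have haltW : ∀ v, BW v v = 0 := fun v => halt v
  have hndW : ∀ v, (∀ w, BW v w = 0) → v = 0 := by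
    intro v hv
    apply Subtype.ext
    apply hnd
    intro u
    have h1 := hv (π u)
    rw [hBW, hπ] at h1
    have h2 := (hW v).1 v.2
    rw [map_sub, map_sub, map_smul, map_smul, hsk v y, hsk v p, h2.1, h2.2] at h1
    simpa using h1
  have hBπ : ∀ u v, B p u = 0 → B p v = 0 → BW (π u) (π v) = B u v := by
    intro u v hu hv
    rw [hBW, hπ, hπ, hu, hv]
    simp only [zero_mul, zero_smul, sub_zero, map_sub, map_smul, LinearMap.sub_apply,
      LinearMap.smul_apply, halt, hv, hsk u p, hu]
    simp
  let H : Finset (Fin s → V) := Finset.univ.filter fun X => LinearIndependent F X ∧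
    Submodule.span F (Set.range X) ∈ 𝓕
  have hH : ∀ X, X ∈ H ↔ LinearIndependent F X ∧ Submodule.span F (Set.range X) ∈ 𝓕 := by
    intro X; simp [H]
  have hmem : ∀ (X : Fin s → V) i, X i ∈ Submodule.span F (Set.range X) :=
    fun X i => Submodule.subset_span ⟨i, rfl⟩
  have hpX : ∀ X ∈ H, ∀ i, B p (X i) = 0 := by
    intro X hX i
    exact (h𝓕 _ ((hH X).1 hX).2).2.2.1 _ (hmem X i)
  let Φ : (Fin s → V) → (Fin s → W) := fun X i => π (X i)
  have hcardH : 𝓕.card * ∏ i ∈ Finset.range s, (Fintype.card F ^ s - Fintype.card F ^ i)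
      ≤ H.card := by
    rw [Finset.card_eq_sum_card_fiberwise (f := fun X : Fin s → V => Submodule.span F (Set.range X))
      (s := H) (t := 𝓕) (by intro X hX; exact ((hH X).1 hX).2), ← smul_eq_mul]
    refine Finset.card_nsmul_le_sum _ _ _ fun S hS => ?_
    refine (card_frames_ge S (h𝓕 S hS).2.1).trans (Finset.card_le_card ?_)
    intro X hX
    simp only [Finset.mem_filter, Finset.mem_univ, true_and] at hX
    rw [Finset.mem_filter, hH]
    exact ⟨⟨hX.1, hX.2 ▸ hS⟩, hX.2⟩
  have hcardG : H.card ≤ (H.image Φ).card * Fintype.card F ^ s := by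
    have h1 : H.card ≤ ((H.image Φ) ×ˢ (Finset.univ : Finset (Fin s → F))).card := by
      refine Finset.card_le_card_of_injOn (fun X => (Φ X, fun i => B y (X i))) ?_ ?_
      · intro X hX
        simp only [Finset.coe_product, Set.mem_prod, Finset.mem_coe, Finset.mem_univ, and_true]
        exact Finset.mem_image_of_mem Φ hX
      · intro X hX X' hX' hXX
        simp only [Prod.mk.injEq] at hXX
        funext i
        have e1 := congrArg (Subtype.val) (congrFun hXX.1 i)
        have e2 := congrFun hXX.2 i
        simp only [Φ, hπ, hpX X hX i, hpX X' hX' i] at e1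
        rw [e2] at e1
        simpa using e1
    rw [Finset.card_product, Finset.card_univ, Fintype.card_fun, Fintype.card_fin] at h1
    exact h1
  have hfr : ∀ Z ∈ H.image Φ, Fr BW Z := by
    intro Z hZ
    obtain ⟨X, hX, rfl⟩ := Finset.mem_image.mp hZ
    have hS := h𝓕 _ ((hH X).1 hX).2
    refine ⟨?_, fun i j => ?_⟩
    · refine ((hH X).1 hX).1.map (f := π) ?_
      rw [Submodule.disjoint_def]
      intro v hv hk
      have h1 := congrArg Subtype.val (LinearMap.mem_ker.mp hk)
      rw [hπ, hS.2.2.1 v hv] at h1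
      simp only [zero_mul, zero_smul, sub_zero, Submodule.coe_zero] at h1
      have h2 := sub_eq_zero.mp h1
      by_cases hc : B y v * (B y p)⁻¹ = 0
      · rw [h2, hc, zero_smul]
      · exfalso
        apply hS.2.2.2
        have : p = (B y v * (B y p)⁻¹)⁻¹ • v := by
          exact (inv_smul_eq_iff₀ hc).mpr h2 |>.symm
        rw [this]
        exact Submodule.smul_mem _ _ hv
    · rw [hBπ _ _ (hpX X hX i) (hpX X hX j)]
      exact hS.1 _ (hmem X i) _ (hmem X j)
  have hopp : ∀ Z ∈ H.image Φ, ∀ Z' ∈ H.image Φ, ¬ Opp BW Z Z' := by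
    intro Z hZ Z' hZ' hop
    obtain ⟨X, hX, rfl⟩ := Finset.mem_image.mp hZ
    obtain ⟨X', hX', rfl⟩ := Finset.mem_image.mp hZ'
    refine hno _ ((hH X).1 hX).2 _ ((hH X').1 hX').2 ?_
    unfold SpaceOpp
    rw [eq_bot_iff]
    intro v hv
    obtain ⟨hv1, hv2⟩ := Submodule.mem_inf.mp hv
    obtain ⟨c, rfl⟩ := (Submodule.mem_span_range_iff_exists_fun F).mp hv2
    simp only [bperp, Submodule.mem_iInf, LinearMap.mem_ker] at hv1
    have hc : ∀ j, c j = 0 := by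
      refine (Fintype.linearIndependent_iff.mp hop) c ?_
      funext i
      have h1 := hv1 _ (hmem X i)
      simp only [map_sum, map_smul, smul_eq_mul] at h1
      simp only [Finset.sum_apply, Pi.smul_apply, smul_eq_mul, cols, Φ, Pi.zero_apply]
      rw [← h1]
      refine Finset.sum_congr rfl fun j _ => ?_
      rw [hBπ _ _ (hpX X hX i) (hpX X' hX' j)]
    simp [hc]
  have key := frames_bound haltW hndW hWdim hsn (H.image Φ) hfr hopp
  have hle : (𝓕.card : ℝ) * ((∏ i ∈ Finset.range s,
      (Fintype.card F ^ s - Fintype.card F ^ i) : ℕ) : ℝ) ≤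
      ((H.image Φ).card : ℝ) * (Fintype.card F : ℝ) ^ s := by
    exact_mod_cast hcardH.trans hcardG
  calc _ ≤ ((H.image Φ).card : ℝ) * (Fintype.card F : ℝ) ^ s * ((Fintype.card F : ℝ) ^ (n - 1) + 1) :=
        mul_le_mul_of_nonneg_right hle (by positivity)
    _ = (Fintype.card F : ℝ) ^ s * (((H.image Φ).card : ℝ) * ((Fintype.card F : ℝ) ^ (n - 1) + 1)) := by
        ring
    _ ≤ _ := mul_le_mul_of_nonneg_left key (by positivity)

theorem numerics {q m s : ℕ} (hq : 1 < q) (hs1 : 1 ≤ s) (hs : s ≤ m) (c : ℝ)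
    (h : c * ((∏ i ∈ Finset.range s, (q ^ s - q ^ i) : ℕ) : ℝ) * ((q : ℝ) ^ m + 1) ≤
      (q : ℝ) ^ s * ((∏ j ∈ Finset.range s, (q ^ (2 * m - j) - q ^ j) : ℕ) : ℝ)) :
    c ≤ (q : ℝ) ^ s * gaussq q m s * ∏ i ∈ Finset.Icc 1 (s - 1), ((q : ℝ) ^ (m - i) + 1) := by
  have hq' : (1:ℝ) < q := by exact_mod_cast hq
  have e1 : ((∏ i ∈ Finset.range s, (q ^ s - q ^ i) : ℕ) : ℝ) =
      (∏ i ∈ Finset.range s, (q:ℝ) ^ i) * ∏ i ∈ Finset.Icc 1 s, ((q:ℝ) ^ i - 1) := by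
    have hr : ∏ i ∈ Finset.Icc 1 s, ((q:ℝ) ^ i - 1) = ∏ i ∈ Finset.range s, ((q:ℝ) ^ (s - i) - 1) := by
      rw [← Finset.prod_range_reflect, ← Finset.Ico_add_one_right_eq_Icc, Finset.prod_Ico_eq_prod_range]
      refine Finset.prod_congr rfl fun i hi => ?_
      have := Finset.mem_range.mp hi
      congr 2; omega
    rw [hr, ← Finset.prod_mul_distrib, Nat.cast_prod]
    refine Finset.prod_congr rfl fun i hi => ?_
    have := Finset.mem_range.mp hi
    rw [Nat.cast_sub (Nat.pow_le_pow_right (by omega) this.le), mul_sub, ← pow_add]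
    push_cast
    rw [show i + (s - i) = s by omega, mul_one]
  have e2 : ((∏ j ∈ Finset.range s, (q ^ (2 * m - j) - q ^ j) : ℕ) : ℝ) =
      (∏ i ∈ Finset.range s, (q:ℝ) ^ i) * (∏ i ∈ Finset.Icc 1 s, ((q:ℝ) ^ (m - s + i) - 1)) *
        (((q:ℝ) ^ m + 1) * ∏ i ∈ Finset.Icc 1 (s - 1), ((q : ℝ) ^ (m - i) + 1)) := by
    have hr : ∏ i ∈ Finset.Icc 1 s, ((q:ℝ) ^ (m - s + i) - 1)
        = ∏ i ∈ Finset.range s, ((q:ℝ) ^ (m - i) - 1) := by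
      rw [← Finset.prod_range_reflect, ← Finset.Ico_add_one_right_eq_Icc, Finset.prod_Ico_eq_prod_range]
      refine Finset.prod_congr rfl fun i hi => ?_
      have := Finset.mem_range.mp hi
      congr 2; omega
    have hr2 : ((q:ℝ) ^ m + 1) * ∏ i ∈ Finset.Icc 1 (s - 1), ((q : ℝ) ^ (m - i) + 1)
        = ∏ i ∈ Finset.range s, ((q:ℝ) ^ (m - i) + 1) := by
      obtain ⟨t, rfl⟩ : ∃ t, s = t + 1 := ⟨s - 1, by omega⟩
      rw [Finset.prod_range_succ', mul_comm, ← Finset.Ico_add_one_right_eq_Icc,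
        Finset.prod_Ico_eq_prod_range]
      simp [add_comm]
    rw [hr, hr2, ← Finset.prod_mul_distrib, ← Finset.prod_mul_distrib, Nat.cast_prod]
    refine Finset.prod_congr rfl fun i hi => ?_
    have := Finset.mem_range.mp hi
    rw [Nat.cast_sub (Nat.pow_le_pow_right (by omega) (by omega))]
    push_cast
    rw [show 2 * m - i = i + (m - i) + (m - i) by omega, pow_add, pow_add]
    ring
  rw [e1, e2] at h
  have hp : 0 < ∏ i ∈ Finset.range s, (q:ℝ) ^ i := Finset.prod_pos fun i _ => by positivity
  have hD : 0 < ∏ i ∈ Finset.Icc 1 s, ((q:ℝ) ^ i - 1) := Finset.prod_pos fun i hi => by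
    have := (Finset.mem_Icc.mp hi).1
    have := one_lt_pow₀ hq' (n := i) (by omega)
    linarith
  have hm : 0 < (q:ℝ) ^ m + 1 := by positivity
  unfold gaussq
  rw [Finset.prod_div_distrib]
  generalize ∏ i ∈ Finset.range s, (q:ℝ) ^ i = a at *
  generalize ∏ i ∈ Finset.Icc 1 s, ((q:ℝ) ^ i - 1) = b at *
  generalize ∏ i ∈ Finset.Icc 1 s, ((q:ℝ) ^ (m - s + i) - 1) = N at *
  generalize ∏ i ∈ Finset.Icc 1 (s - 1), ((q : ℝ) ^ (m - i) + 1) = R at *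
  rw [mul_div_assoc', div_mul_eq_mul_div, le_div_iff₀ hD]
  refine le_of_mul_le_mul_right ?_ (mul_pos hp hm)
  linarith

end EKR

/-- an EKR-set of totally isotropic `s`-spaces contained in `P^⊥` and
not containing the point `P` has size at most
`q^s · [(n-1) choose s]_q · ∏_{i=1}^{s-1}(q^{n-1-i}+1)`. -/
theorem stmt_19 {F V : Type} [Field F] [Fintype F] [AddCommGroup V] [Module F V]
    [FiniteDimensional F V] (n q : ℕ) (hn : 3 ≤ n) (hq : Fintype.card F = q)
    (B : V →ₗ[F] V →ₗ[F] F) (halt : IsAltForm B) (hnd : NondegForm B)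
    (hdim : Module.finrank F V = 2 * n)
    (s : ℕ) (hs1 : 1 ≤ s) (hsn : s ≤ n - 1)
    (P : Submodule F V) (hPiso : IsTotIso B P) (hPrank : Module.finrank F P = 1)
    (𝓕 : Set (Submodule F V))
    (h𝓕 : ∀ S ∈ 𝓕, IsTotIso B S ∧ Module.finrank F S = s ∧
      S ≤ bperp B P ∧ ¬ P ≤ S)
    (hno : ∀ S ∈ 𝓕, ∀ T ∈ 𝓕, ¬ SpaceOpp B S T) :
    (𝓕.ncard : ℝ) ≤
      (q : ℝ) ^ s * gaussq q (n - 1) s *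
        ∏ i ∈ Finset.Icc 1 (s - 1), ((q : ℝ) ^ (n - 1 - i) + 1) := by
  have hfin : Finite V := Module.finite_of_finite F
  have hft : Fintype V := Fintype.ofFinite V
  have hfs : Finite (Submodule F V) := Finite.of_injective _ SetLike.coe_injective
  obtain ⟨p, hp, hspan⟩ := finrank_eq_one_iff'.mp hPrank
  have hp0 : (p : V) ≠ 0 := fun h => hp (Subtype.ext h)
  subst hq
  have hF : (𝓕.toFinite.toFinset.card : ℝ) = (𝓕.ncard : ℝ) := by
    rw [Set.ncard_eq_toFinset_card 𝓕 𝓕.toFinite]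
  rw [← hF]
  refine EKR.numerics Fintype.one_lt_card hs1 hsn _ ?_
  refine EKR.reduction halt hnd hdim hsn (p : V) hp0 _ ?_ ?_
  · intro S hS
    obtain ⟨h1, h2, h3, h4⟩ := h𝓕 S (by simpa using hS)
    refine ⟨h1, h2, fun v hv => ?_, fun hpS => h4 fun w hw => ?_⟩
    · have := h3 hv
      simp only [bperp, Submodule.mem_iInf, LinearMap.mem_ker] at this
      exact this p p.2
    · obtain ⟨c, hc⟩ := hspan ⟨w, hw⟩
      have : w = c • (p : V) := (congrArg Subtype.val hc).symm
      rw [this]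
      exact S.smul_mem c hpS
  · intro S hS T hT
    exact hno S (by simpa using hS) T (by simpa using hT)
end
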